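/- Let S₁, S₂ be 2-dimensional complex vector spaces, and on the space of triples (p₁, p₂, a) ∈ End(S₁) × End(S₂) × Hom(S₂,S₁), define C = {a p₂ = p₁ a, det p₁ = det p₂, Tr p₁ = Tr p₂}. Then the restriction of the Koszul-type free resolution of O_C to a = 0, p₁ = p₂ = 0 contains exactly the GL(S₂)-irreducible representations ℂ (trivial), S₂, and det S₂, i.e., Tor groups of O_C at the origin, as GL(S₂)-representations, involve only these three irreducibles. -/

import Mathlib

noncomputable section

open MvPolynomial

/-- Points `(p₁, p₂, a) ∈ End(S₁) × End(S₂) × Hom(S₂,S₁)`. -/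
abbrev Pt19 := Matrix (Fin 2) (Fin 2) ℂ × Matrix (Fin 2) (Fin 2) ℂ ×
  Matrix (Fin 2) (Fin 2) ℂ

abbrev Idx19 := (Fin 2 × Fin 2) ⊕ (Fin 2 × Fin 2) ⊕ (Fin 2 × Fin 2)

/-- The polynomial ring `R = ℂ[End(S₁) × End(S₂) × Hom(S₂,S₁)]`. -/
abbrev R19 := MvPolynomial Idx19 ℂ

def coords19 (t : Pt19) : Idx19 → ℂ :=
  Sum.elim (fun ij => t.1 ij.1 ij.2)
    (Sum.elim (fun ij => t.2.1 ij.1 ij.2) (fun ij => t.2.2 ij.1 ij.2))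

/-- `C = {a p₂ = p₁ a, det p₁ = det p₂, Tr p₁ = Tr p₂}`, the closure of the
conjugation locus. -/
def C19 : Set Pt19 :=
  {t | t.2.2 * t.2.1 = t.1 * t.2.2 ∧ t.1.det = t.2.1.det ∧ t.1.trace = t.2.1.trace}

/-- The vanishing ideal of `C`; `O_C = R19 ⧸ J19`. -/
def J19 : Ideal R19 where
  carrier := {f | ∀ t ∈ C19, eval (coords19 t) f = 0}
  add_mem' := fun ha hb t ht => by simp [map_add, ha t ht, hb t ht]
  zero_mem' := fun t ht => by simp
  smul_mem' := fun c f hf t ht => by simp [smul_eq_mul, map_mul, hf t ht]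

/-- The substitution action of `g ∈ GL(S₂)` on `R19`, induced by
`g·(p₁,p₂,a) = (p₁, g p₂ g⁻¹, a g⁻¹)`. -/
def σ19 (g : Matrix.GeneralLinearGroup (Fin 2) ℂ) : R19 →ₐ[ℂ] R19 :=
  aeval (Sum.elim (fun ij => X (Sum.inl ij))
    (Sum.elim
      (fun ij => ∑ k : Fin 2, ∑ l : Fin 2,
        C ((↑g⁻¹ : Matrix (Fin 2) (Fin 2) ℂ) ij.1 k *
           (↑g : Matrix (Fin 2) (Fin 2) ℂ) l ij.2) * X (Sum.inr (Sum.inl (k, l))))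
      (fun ij => ∑ l : Fin 2,
        C ((↑g : Matrix (Fin 2) (Fin 2) ℂ) l ij.2) * X (Sum.inr (Sum.inr (ij.1, l))))))

/-- A free `R19`-module which is a direct sum of `a` copies of the trivial
`GL(S₂)`-representation `ℂ`, `b` copies of `S₂`, and `c` copies of `det S₂`. -/
abbrev Blk (a b c : ℕ) := (Fin a → R19) × (Fin b → Fin 2 → R19) × (Fin c → R19)

/-- The `GL(S₂)`-action on such a block. -/
def actBlk {a b c : ℕ} (g : Matrix.GeneralLinearGroup (Fin 2) ℂ) (v : Blk a b c) :
    Blk a b c :=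
  (fun i => σ19 g (v.1 i),
   fun i j => ∑ m : Fin 2, C ((↑g : Matrix (Fin 2) (Fin 2) ℂ) j m) * σ19 g (v.2.1 i m),
   fun i => C (↑g : Matrix (Fin 2) (Fin 2) ℂ).det * σ19 g (v.2.2 i))

/-- All components of a block element lie in the maximal ideal of the origin. -/
def BlkAtO {a b c : ℕ} (v : Blk a b c) : Prop :=
  (∀ i, constantCoeff (v.1 i) = 0) ∧ (∀ i j, constantCoeff (v.2.1 i j) = 0) ∧
  (∀ i, constantCoeff (v.2.2 i) = 0)

/-!
The traceless parts `q₁`, `q₂` of `p₁`, `p₂` together with `a` are the ten entries of a generic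
skew-symmetric `5 × 5` matrix whose `4 × 4` Pfaffians are the entries of `E = q₁ a - a q₂` and
`D = det q₁ - det q₂`. The associated complex `0 → A → A⁵ → A⁵ → A` resolves the Pfaffian ideal.
At the second term this holds because `D` is prime and does not divide the entries of `E`. Setting
`a₀₀ = 0` preserves that argument, so `a₀₀` is regular on the cokernel of the skew-symmetric matrix;
exactness at the third term may therefore be checked where `a₀₀` is invertible, and there the
complex is a Koszul complex on three entries of `E`.

Likewise `a₀₁` is regular modulo the Pfaffians, and where it is invertible the zero locus of `E` is
a graph, so the Pfaffian ideal is prime and is the vanishing ideal of its zero locus. The trace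
difference `tr p₁ - tr p₂` is regular modulo this ideal, and the mapping cone of multiplication by
it on the Pfaffian complex resolves `O_C`. Every map involved is natural in the triple, so that
equivariance reduces to a change of basis of `S₂` and minimality to evaluation at the origin.
-/

/-- Traceless endomorphisms `q₁` of `S₁` and `q₂` of `S₂` with a map `a : S₂ → S₁`, over `A`.
Their ten entries are the entries of a skew-symmetric `5 × 5` matrix. -/
structure TracelessTriple (A : Type*) [CommRing A] where
  q₁ : Matrix (Fin 2) (Fin 2) A
  q₂ : Matrix (Fin 2) (Fin 2) A
  a : Matrix (Fin 2) (Fin 2) A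
  trace_q₁ : q₁.trace = 0
  trace_q₂ : q₂.trace = 0

/-- The free module of rank five carrying the two middle terms of the Pfaffian complex. -/
abbrev PfaffTerm (A : Type*) := Matrix (Fin 2) (Fin 2) A × A

namespace TracelessTriple

section Complex

variable {A : Type*} [CommRing A] (T : TracelessTriple A)

/-- The failure of `a` to intertwine `q₁` and `q₂`; its entries are four of the five
`4 × 4` Pfaffians. -/
def E : Matrix (Fin 2) (Fin 2) A := T.q₁ * T.a - T.a * T.q₂

/-- The difference of the determinants, which is the fifth Pfaffian. -/
def D : A := T.q₁.det - T.q₂.det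

/-- The last differential of the Pfaffian complex `A → A⁵ → A⁵ → A`, given by the Pfaffians. -/
def socle : A →ₗ[A] PfaffTerm A :=
  LinearMap.toSpanSingleton A _ (T.E.adjugate, -T.D)

/-- The middle differential of the Pfaffian complex, given by the skew-symmetric matrix. -/
def skew : PfaffTerm A →ₗ[A] PfaffTerm A where
  toFun v := (T.q₂ * v.1 + v.1 * T.q₁ + v.2 • T.a.adjugate, (T.a * v.1).trace)
  map_add' v w := by
    ext : 1
    · simp only [Prod.fst_add, Prod.snd_add, mul_add, add_mul, add_smul]; abel
    · simp [mul_add]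
  map_smul' x v := by
    ext : 1 <;> simp [mul_smul]

/-- The first differential of the Pfaffian complex, whose image is the Pfaffian ideal. -/
def pfaff : PfaffTerm A →ₗ[A] A where
  toFun w := (T.E * w.1).trace + T.D * w.2
  map_add' v w := by simp only [Prod.fst_add, Prod.snd_add, mul_add, Matrix.trace_add]; abel
  map_smul' x v := by simp [mul_add, mul_left_comm]

theorem socle_apply (u : A) : T.socle u = (u • T.E.adjugate, -(u * T.D)) := by
  simp [socle, LinearMap.toSpanSingleton_apply]

theorem skew_apply (v : PfaffTerm A) :
    T.skew v = (T.q₂ * v.1 + v.1 * T.q₁ + v.2 • T.a.adjugate, (T.a * v.1).trace) :=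
  rfl

theorem pfaff_apply (w : PfaffTerm A) : T.pfaff w = (T.E * w.1).trace + T.D * w.2 :=
  rfl

theorem adjugate_eq_neg_of_trace_eq_zero {q : Matrix (Fin 2) (Fin 2) A} (hq : q.trace = 0) :
    q.adjugate = -q := by
  rw [Matrix.trace_fin_two] at hq
  ext i j
  fin_cases i <;> fin_cases j <;>
    simp only [Matrix.adjugate_fin_two, Matrix.neg_apply, Matrix.of_apply, Matrix.cons_val,
      Fin.zero_eta, Fin.mk_one] <;>
    linear_combination hq

theorem mul_self_of_trace_eq_zero {q : Matrix (Fin 2) (Fin 2) A} (hq : q.trace = 0) :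
    q * q = -(q.det • 1) := by
  rw [← Matrix.mul_adjugate, adjugate_eq_neg_of_trace_eq_zero hq, mul_neg, neg_neg]

theorem adjugate_sub_fin_two (M N : Matrix (Fin 2) (Fin 2) A) :
    (M - N).adjugate = M.adjugate - N.adjugate := by
  ext i j
  fin_cases i <;> fin_cases j <;> simp [Matrix.adjugate_fin_two, sub_eq_add_neg, add_comm]

theorem adjugate_E : T.E.adjugate = T.q₂ * T.a.adjugate - T.a.adjugate * T.q₁ := by
  rw [E, adjugate_sub_fin_two, Matrix.adjugate_mul_distrib, Matrix.adjugate_mul_distrib,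
    adjugate_eq_neg_of_trace_eq_zero T.trace_q₁, adjugate_eq_neg_of_trace_eq_zero T.trace_q₂]
  noncomm_ring

theorem trace_mul_adjugate_E : (T.a * T.E.adjugate).trace = 0 := by
  have h₁ : (T.a * (T.a.adjugate * T.q₁)).trace = 0 := by
    rw [← mul_assoc, Matrix.mul_adjugate, smul_one_mul, Matrix.trace_smul, T.trace_q₁, smul_zero]
  have h₂ : (T.a * (T.q₂ * T.a.adjugate)).trace = 0 := by
    rw [Matrix.trace_mul_comm, mul_assoc, Matrix.adjugate_mul, Matrix.mul_smul, mul_one,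
      Matrix.trace_smul, T.trace_q₂, smul_zero]
  rw [adjugate_E, mul_sub, Matrix.trace_sub, h₁, h₂, sub_zero]

theorem trace_E_mul_adjugate : (T.E * T.a.adjugate).trace = 0 := by
  have h₁ : (T.q₁ * T.a * T.a.adjugate).trace = 0 := by
    rw [mul_assoc, Matrix.mul_adjugate, Matrix.mul_smul, mul_one, Matrix.trace_smul, T.trace_q₁,
      smul_zero]
  have h₂ : (T.a * T.q₂ * T.a.adjugate).trace = 0 := by
    rw [Matrix.trace_mul_comm, ← mul_assoc, Matrix.adjugate_mul, smul_one_mul, Matrix.trace_smul,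
      T.trace_q₂, smul_zero]
  rw [E, sub_mul, Matrix.trace_sub, h₁, h₂, sub_zero]

theorem q₂_mul_adjugate_E_add : T.q₂ * T.E.adjugate + T.E.adjugate * T.q₁ = T.D • T.a.adjugate :=
  calc T.q₂ * T.E.adjugate + T.E.adjugate * T.q₁
      = T.q₂ * T.q₂ * T.a.adjugate - T.a.adjugate * (T.q₁ * T.q₁) := by
        rw [adjugate_E]; noncomm_ring
    _ = T.D • T.a.adjugate := by
        rw [mul_self_of_trace_eq_zero T.trace_q₁, mul_self_of_trace_eq_zero T.trace_q₂, D,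
          neg_mul, mul_neg, smul_one_mul, Matrix.mul_smul, mul_one, sub_smul]
        abel

theorem q₁_mul_E_add : T.q₁ * T.E + T.E * T.q₂ = -(T.D • T.a) :=
  calc T.q₁ * T.E + T.E * T.q₂ = T.q₁ * T.q₁ * T.a - T.a * (T.q₂ * T.q₂) := by
        rw [E]; noncomm_ring
    _ = -(T.D • T.a) := by
        rw [mul_self_of_trace_eq_zero T.trace_q₁, mul_self_of_trace_eq_zero T.trace_q₂, D,
          neg_mul, mul_neg, smul_one_mul, Matrix.mul_smul, mul_one, sub_smul]
        abel

theorem skew_socle (u : A) : T.skew (T.socle u) = 0 := by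
  rw [socle_apply, skew_apply, Matrix.mul_smul, Matrix.smul_mul, Matrix.mul_smul, ← smul_add,
    q₂_mul_adjugate_E_add, neg_smul, mul_smul, add_neg_cancel, Matrix.trace_smul,
    trace_mul_adjugate_E, smul_zero, Prod.mk_zero_zero]

theorem pfaff_skew (v : PfaffTerm A) : T.pfaff (T.skew v) = 0 :=
  calc T.pfaff (T.skew v)
      = ((T.q₁ * T.E + T.E * T.q₂) * v.1).trace + v.2 * (T.E * T.a.adjugate).trace
          + T.D * (T.a * v.1).trace := by
        have h : (T.E * (v.1 * T.q₁)).trace = (T.q₁ * T.E * v.1).trace := by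
          rw [← mul_assoc, Matrix.trace_mul_comm, mul_assoc]
        rw [skew_apply, pfaff_apply, mul_add, mul_add, Matrix.trace_add, Matrix.trace_add, h,
          Matrix.mul_smul, Matrix.trace_smul, smul_eq_mul, add_mul, Matrix.trace_add, mul_assoc T.E,
          add_comm (T.q₁ * T.E * v.1).trace]
    _ = 0 := by
        rw [q₁_mul_E_add, trace_E_mul_adjugate, neg_mul, Matrix.smul_mul, Matrix.trace_neg,
          Matrix.trace_smul, smul_eq_mul]
        ring

theorem smul_add_smul_adjugate_E {v : PfaffTerm A} (hv : T.skew v = 0) :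
    T.D • v.1 + v.2 • T.E.adjugate = 0 := by
  have h : T.q₂ * v.1 + v.1 * T.q₁ + v.2 • T.a.adjugate = 0 := congrArg Prod.fst hv
  calc T.D • v.1 + v.2 • T.E.adjugate
      = T.q₂ * T.q₂ * v.1 - v.1 * (T.q₁ * T.q₁)
          + v.2 • (T.q₂ * T.a.adjugate - T.a.adjugate * T.q₁) := by
        rw [mul_self_of_trace_eq_zero T.trace_q₁, mul_self_of_trace_eq_zero T.trace_q₂, D,
          neg_mul, mul_neg, smul_one_mul, Matrix.mul_smul, mul_one, sub_smul, adjugate_E]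
        abel
    _ = T.q₂ * (T.q₂ * v.1 + v.1 * T.q₁ + v.2 • T.a.adjugate)
          - (T.q₂ * v.1 + v.1 * T.q₁ + v.2 • T.a.adjugate) * T.q₁ := by
        rw [mul_add, add_mul, Matrix.mul_smul, Matrix.smul_mul, smul_sub]
        noncomm_ring
    _ = 0 := by rw [h, mul_zero, zero_mul, sub_zero]

theorem socle_injective [IsDomain A] (hD : T.D ≠ 0) : Function.Injective T.socle := by
  refine (injective_iff_map_eq_zero _).2 fun u hu => ?_
  rw [socle_apply] at hu
  have h : u * T.D = 0 := neg_eq_zero.1 (congrArg Prod.snd hu)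
  exact (mul_eq_zero.1 h).resolve_right hD

theorem exact_socle_skew [IsDomain A] (hD : Prime T.D) {i j : Fin 2}
    (hE : ¬T.D ∣ T.E.adjugate i j) : Function.Exact T.socle T.skew := by
  refine fun v => ⟨fun hv => ?_, ?_⟩
  · have hv' := T.smul_add_smul_adjugate_E hv
    have hij : T.D * v.1 i j + v.2 * T.E.adjugate i j = 0 := congrFun₂ hv' i j
    obtain ⟨u, hu⟩ : T.D ∣ v.2 := by
      have : T.D ∣ v.2 * T.E.adjugate i j :=
        ⟨-v.1 i j, by linear_combination hij⟩
      exact (hD.dvd_or_dvd this).resolve_right hE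
    have hv₁ : v.1 = -u • T.E.adjugate := by
      have : T.D • (v.1 + u • T.E.adjugate) = 0 := by rwa [smul_add, smul_smul, ← hu]
      rw [neg_smul]
      exact eq_neg_of_add_eq_zero_left ((smul_eq_zero.1 this).resolve_left hD.ne_zero)
    exact ⟨-u, by rw [socle_apply, ← hv₁, neg_mul, neg_neg, mul_comm, ← hu]⟩
  · rintro ⟨u, rfl⟩
    exact T.skew_socle u

end Complex
end TracelessTriple

theorem isSMulRegular_quotient_range {A M N P : Type*} [CommRing A] [AddCommGroup M] [Module A M]
    [AddCommGroup N] [Module A N] [AddCommGroup P] [Module A P] {d : M →ₗ[A] N} {d' : N →ₗ[A] P}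
    {x : A} (hd : ∀ v, d' (d v) = 0) (hx : IsSMulRegular P x)
    (hmod : ∀ w p, d' w = x • p → ∃ v w', w - d v = x • w') :
    IsSMulRegular (P ⧸ LinearMap.range d') x := by
  rw [isSMulRegular_quotient_iff_mem_of_smul_mem]
  rintro p ⟨w, hw⟩
  obtain ⟨v, w', hw'⟩ := hmod w p hw
  refine ⟨w', hx ?_⟩
  calc x • d' w' = d' (w - d v) := by rw [hw', map_smul]
    _ = x • p := by rw [map_sub, hd, sub_zero, hw]

theorem comp_self_of_dvd_sub {A : Type*} [CommRing A] {κ : A →+* A} {x : A}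
    (hκ : ∀ u, x ∣ u - κ u) (hκx : κ x = 0) : κ.comp κ = κ := by
  ext u
  obtain ⟨w, hw⟩ := hκ u
  have h := congrArg κ hw
  rw [map_sub, map_mul, hκx, zero_mul, sub_eq_zero] at h
  exact h.symm

/-- Entrywise application of a ring homomorphism to the middle terms of the Pfaffian complex. -/
def PfaffTerm.map {A B : Type*} [CommRing A] [CommRing B] (f : A →+* B) :
    PfaffTerm A →ₛₗ[f] PfaffTerm B where
  toFun w := (f.mapMatrix w.1, f w.2)
  map_add' v w := by rw [Prod.fst_add, Prod.snd_add, map_add, map_add, Prod.mk_add_mk]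
  map_smul' x w := by ext <;> simp

theorem PfaffTerm.map_apply {A B : Type*} [CommRing A] [CommRing B] (f : A →+* B)
    (w : PfaffTerm A) : PfaffTerm.map f w = (f.mapMatrix w.1, f w.2) :=
  rfl

theorem PfaffTerm.exists_sub_map_eq_smul {A : Type*} [CommRing A] {κ : A →+* A} {x : A}
    (h : ∀ u, x ∣ u - κ u) (w : PfaffTerm A) : ∃ w', w - PfaffTerm.map κ w = x • w' := by
  choose q hq using h
  exact ⟨(w.1.map q, q w.2), Prod.ext (Matrix.ext fun i j => hq (w.1 i j)) (hq w.2)⟩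

theorem PfaffTerm.map_map_self {A : Type*} [CommRing A] {κ : A →+* A} {x : A}
    (hκ : ∀ u, x ∣ u - κ u) (hκx : κ x = 0) (w : PfaffTerm A) :
    PfaffTerm.map κ (PfaffTerm.map κ w) = PfaffTerm.map κ w := by
  have h (u : A) : κ (κ u) = κ u := RingHom.congr_fun (comp_self_of_dvd_sub hκ hκx) u
  exact Prod.ext (Matrix.ext fun i j => h (w.1 i j)) (h w.2)

namespace TracelessTriple

section Localization

variable {A B : Type*} [CommRing A] [CommRing B]

/-- Base change of a traceless triple along a ring homomorphism. -/
def map (f : A →+* B) (T : TracelessTriple A) : TracelessTriple B where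
  q₁ := f.mapMatrix T.q₁
  q₂ := f.mapMatrix T.q₂
  a := f.mapMatrix T.a
  trace_q₁ := by rw [RingHom.mapMatrix_apply, ← AddMonoidHom.map_trace, T.trace_q₁, map_zero]
  trace_q₂ := by rw [RingHom.mapMatrix_apply, ← AddMonoidHom.map_trace, T.trace_q₂, map_zero]

variable (f : A →+* B) (T : TracelessTriple A)

theorem map_E : (T.map f).E = f.mapMatrix T.E := by
  simp only [E, map, map_sub, map_mul]

theorem map_D : (T.map f).D = f T.D := by
  simp only [D, map, map_sub, RingHom.map_det]

theorem map_socle (u : A) : PfaffTerm.map f (T.socle u) = (T.map f).socle (f u) := by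
  rw [socle_apply, socle_apply, map_E, map_D, ← RingHom.map_adjugate, PfaffTerm.map_apply,
    map_neg, map_mul]
  ext <;> simp

theorem mapMatrix_smul (x : A) (M : Matrix (Fin 2) (Fin 2) A) :
    f.mapMatrix (x • M) = f x • f.mapMatrix M := by
  ext; simp

theorem trace_mapMatrix (M : Matrix (Fin 2) (Fin 2) A) : (f.mapMatrix M).trace = f M.trace :=
  (AddMonoidHom.map_trace f M).symm

theorem map_skew (v : PfaffTerm A) :
    PfaffTerm.map f (T.skew v) = (T.map f).skew (PfaffTerm.map f v) := by
  simp only [skew_apply, PfaffTerm.map_apply, map, map_add, map_mul, RingHom.map_adjugate,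
    mapMatrix_smul, ← trace_mapMatrix]

theorem map_pfaff (w : PfaffTerm A) : f (T.pfaff w) = (T.map f).pfaff (PfaffTerm.map f w) := by
  simp only [pfaff_apply, PfaffTerm.map_apply, map_add, map_E, map_D, trace_mapMatrix,
    ← map_mul]

theorem map_map {C : Type*} [CommRing C] (g : B →+* C) : (T.map f).map g = T.map (g.comp f) :=
  rfl

section Specialization

variable {κ : A →+* A} {x : A} (hκ : ∀ u, x ∣ u - κ u) (hκx : κ x = 0)
include hκ hκx

theorem isSMulRegular_coker_skew [IsDomain A] (hx : x ≠ 0)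
    (h : Function.Exact (T.map κ).socle (T.map κ).skew) :
    IsSMulRegular (PfaffTerm A ⧸ LinearMap.range T.skew) x := by
  refine isSMulRegular_quotient_range T.skew_socle (IsSMulRegular.of_ne_zero hx) fun w p hw => ?_
  have hw₀ : (T.map κ).skew (PfaffTerm.map κ w) = 0 := by
    rw [← map_skew, hw, map_smulₛₗ, hκx, zero_smul]
  obtain ⟨v, hv⟩ := (h _).1 hw₀
  have hv₀ : PfaffTerm.map κ (w - T.socle v) = 0 := by
    rw [map_sub, map_socle, sub_eq_zero, ← PfaffTerm.map_map_self hκ hκx, ← hv, map_socle,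
      map_map, comp_self_of_dvd_sub hκ hκx]
  obtain ⟨w', hw'⟩ := PfaffTerm.exists_sub_map_eq_smul hκ (w - T.socle v)
  exact ⟨v, w', by rw [← hw', hv₀, sub_zero]⟩

theorem isSMulRegular_coker_pfaff [IsDomain A] (hx : x ≠ 0)
    (h : Function.Exact (T.map κ).skew (T.map κ).pfaff) :
    IsSMulRegular (A ⧸ LinearMap.range T.pfaff) x := by
  refine isSMulRegular_quotient_range T.pfaff_skew (IsSMulRegular.of_ne_zero hx) fun w p hw => ?_
  have hw₀ : (T.map κ).pfaff (PfaffTerm.map κ w) = 0 := by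
    rw [← map_pfaff, hw, smul_eq_mul, map_mul, hκx, zero_mul]
  obtain ⟨v, hv⟩ := (h _).1 hw₀
  have hv₀ : PfaffTerm.map κ (w - T.skew v) = 0 := by
    rw [map_sub, map_skew, sub_eq_zero, ← PfaffTerm.map_map_self hκ hκx, ← hv, map_skew,
      map_map, comp_self_of_dvd_sub hκ hκx]
  obtain ⟨w', hw'⟩ := PfaffTerm.exists_sub_map_eq_smul hκ (w - T.skew v)
  exact ⟨v, w', by rw [← hw', hv₀, sub_zero]⟩

end Specialization

theorem _root_.PfaffTerm.exists_smul_eq_map {L : Type*} [CommRing L] [Algebra A L] (x : A)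
    [IsLocalization.Away x L] (w : PfaffTerm L) :
    ∃ (n : ℕ) (v : PfaffTerm A), algebraMap A L (x ^ n) • w = PfaffTerm.map (algebraMap A L) v := by
  obtain ⟨⟨_, n, rfl⟩, h⟩ := IsLocalization.exist_integer_multiples_of_finite (Submonoid.powers x)
    (Sum.elim (fun ij : Fin 2 × Fin 2 => w.1 ij.1 ij.2) fun _ : Unit => w.2)
  choose v hv using h
  refine ⟨n, (Matrix.of fun i j => v (.inl (i, j)), v (.inr ())),
    Prod.ext (Matrix.ext fun i j => ?_) ?_⟩
  · exact ((hv (.inl (i, j))).trans (Algebra.smul_def _ _)).symm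
  · exact ((hv (.inr ())).trans (Algebra.smul_def _ _)).symm

theorem exact_skew_pfaff_of_localization [IsDomain A] {L : Type*} [CommRing L] [Algebra A L]
    {x : A} [IsLocalization.Away x L] (hx : x ≠ 0)
    (hreg : IsSMulRegular (PfaffTerm A ⧸ LinearMap.range T.skew) x)
    (hL : Function.Exact (T.map (algebraMap A L)).skew (T.map (algebraMap A L)).pfaff) :
    Function.Exact T.skew T.pfaff := by
  have hinj : Function.Injective (PfaffTerm.map (algebraMap A L)) := by
    have h : Function.Injective (algebraMap A L) :=
      IsLocalization.injective L (powers_le_nonZeroDivisors_of_noZeroDivisors hx)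
    exact fun v w hvw => Prod.ext (Matrix.map_injective h (congrArg Prod.fst hvw))
      (h (congrArg Prod.snd hvw))
  refine fun w => ⟨fun hw => ?_, ?_⟩
  · have hwL : (T.map (algebraMap A L)).pfaff (PfaffTerm.map (algebraMap A L) w) = 0 := by
      rw [← map_pfaff, hw, map_zero]
    obtain ⟨v', hv'⟩ := (hL _).1 hwL
    obtain ⟨n, v, hv⟩ := PfaffTerm.exists_smul_eq_map x v'
    have hwv : x ^ n • w = T.skew v := by
      apply hinj
      rw [map_smulₛₗ, ← hv', ← map_smul, hv, map_skew]
    exact mem_of_isSMulRegular_quotient_of_smul_mem (hreg.pow n) ⟨v, hwv.symm⟩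
  · rintro ⟨v, rfl⟩
    exact T.pfaff_skew v

end Localization
end TracelessTriple

theorem exists_eq_koszul {A : Type*} [CommRing A] [IsDomain A] {e₁ e₂ e₃ w₁ w₂ w₃ : A}
    (h₁ : e₁ ≠ 0) (h₂ : IsSMulRegular (A ⧸ Ideal.span {e₁}) e₂)
    (h₃ : IsSMulRegular (A ⧸ Ideal.span {e₁, e₂}) e₃) (h : e₁ * w₁ + e₂ * w₂ + e₃ * w₃ = 0) :
    ∃ u v s, w₁ = -(u * e₃) - s * e₂ ∧ w₂ = s * e₁ - v * e₃ ∧ w₃ = u * e₁ + v * e₂ := by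
  rw [isSMulRegular_quotient_iff_mem_of_smul_mem] at h₂ h₃
  obtain ⟨u, v, huv⟩ : ∃ u v, u * e₁ + v * e₂ = w₃ :=
    Ideal.mem_span_pair.1 <| h₃ _ <|
      Ideal.mem_span_pair.2 ⟨-w₁, -w₂, by rw [smul_eq_mul]; linear_combination -h⟩
  obtain ⟨s, hs⟩ : ∃ s, s * e₁ = w₂ + v * e₃ :=
    Ideal.mem_span_singleton'.1 <| h₂ _ <|
      Ideal.mem_span_singleton'.2 ⟨-(w₁ + u * e₃), by
        rw [smul_eq_mul]; linear_combination -h - e₃ * huv⟩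
  refine ⟨u, v, s, mul_left_cancel₀ h₁ ?_, by linear_combination -hs, huv.symm⟩
  linear_combination h + e₂ * hs + e₃ * huv

namespace TracelessTriple

section Unit

variable {A : Type*} [CommRing A] (T : TracelessTriple A)

theorem q₁_one_one : T.q₁ 1 1 = -T.q₁ 0 0 :=
  eq_neg_of_add_eq_zero_right ((Matrix.trace_fin_two _).symm.trans T.trace_q₁)

theorem q₂_one_one : T.q₂ 1 1 = -T.q₂ 0 0 :=
  eq_neg_of_add_eq_zero_right ((Matrix.trace_fin_two _).symm.trans T.trace_q₂)

theorem E_eq_of : T.E =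
    !![T.q₁ 0 0 * T.a 0 0 + T.q₁ 0 1 * T.a 1 0 - T.a 0 0 * T.q₂ 0 0 - T.a 0 1 * T.q₂ 1 0,
       T.q₁ 0 0 * T.a 0 1 + T.q₁ 0 1 * T.a 1 1 - T.a 0 0 * T.q₂ 0 1 + T.a 0 1 * T.q₂ 0 0;
       T.q₁ 1 0 * T.a 0 0 - T.q₁ 0 0 * T.a 1 0 - T.a 1 0 * T.q₂ 0 0 - T.a 1 1 * T.q₂ 1 0,
       T.q₁ 1 0 * T.a 0 1 - T.q₁ 0 0 * T.a 1 1 - T.a 1 0 * T.q₂ 0 1 + T.a 1 1 * T.q₂ 0 0] := by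
  ext i j
  fin_cases i <;> fin_cases j <;>
    simp only [E, Matrix.sub_apply, Matrix.mul_apply, Fin.sum_univ_two, q₁_one_one, q₂_one_one,
      Matrix.of_apply, Matrix.cons_val, Fin.zero_eta, Fin.mk_one] <;>
    ring

theorem skew_eq_of (V : Matrix (Fin 2) (Fin 2) A) (e : A) : T.skew (V, e) =
    (!![T.q₂ 0 0 * V 0 0 + T.q₂ 0 1 * V 1 0 + V 0 0 * T.q₁ 0 0 + V 0 1 * T.q₁ 1 0 + e * T.a 1 1,
        T.q₂ 0 0 * V 0 1 + T.q₂ 0 1 * V 1 1 + V 0 0 * T.q₁ 0 1 - V 0 1 * T.q₁ 0 0 - e * T.a 0 1;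
        T.q₂ 1 0 * V 0 0 - T.q₂ 0 0 * V 1 0 + V 1 0 * T.q₁ 0 0 + V 1 1 * T.q₁ 1 0 - e * T.a 1 0,
        T.q₂ 1 0 * V 0 1 - T.q₂ 0 0 * V 1 1 + V 1 0 * T.q₁ 0 1 - V 1 1 * T.q₁ 0 0 + e * T.a 0 0],
      T.a 0 0 * V 0 0 + T.a 0 1 * V 1 0 + T.a 1 0 * V 0 1 + T.a 1 1 * V 1 1) := by
  rw [skew_apply]
  refine Prod.ext (Matrix.ext fun i j => ?_) ?_
  · fin_cases i <;> fin_cases j <;>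
      simp only [Matrix.add_apply, Matrix.smul_apply, smul_eq_mul, Matrix.mul_apply,
        Fin.sum_univ_two, Matrix.adjugate_fin_two, q₁_one_one, q₂_one_one, Matrix.of_apply,
        Matrix.cons_val, Fin.zero_eta, Fin.mk_one] <;>
      ring
  · simp only [Matrix.trace_fin_two, Matrix.mul_apply, Fin.sum_univ_two]; ring

theorem koszul_mem_range_skew (u v s : A) :
    (!![u * T.E 0 1 + v * T.E 1 0, s * T.E 0 1 - v * T.E 0 0;
        -(u * T.E 0 0) - s * T.E 1 0, 0], 0) ∈ LinearMap.range T.skew := by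
  refine ⟨(!![u * T.a 0 1 - v * T.a 1 0 + s * T.a 1 1, v * T.a 0 0; -(u * T.a 0 0),
    -(s * T.a 0 0)], u * T.q₁ 0 1 - v * T.q₂ 1 0 - s * (T.q₁ 0 0 + T.q₂ 0 0)), ?_⟩
  rw [skew_eq_of, E_eq_of]
  refine Prod.ext (Matrix.ext fun i j => ?_) ?_
  · fin_cases i <;> fin_cases j <;>
      simp only [Matrix.of_apply, Matrix.cons_val, Fin.zero_eta, Fin.mk_one] <;>
      ring
  · simp only [Matrix.of_apply, Matrix.cons_val]; ring

theorem exists_sub_skew_eq (h : IsUnit (T.a 0 0)) (w : PfaffTerm A) :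
    ∃ v x y z, w - T.skew v = (!![x, y; z, 0], 0) := by
  obtain ⟨i, hi⟩ := h.exists_right_inv
  let w' := w - T.skew (!![i * w.2, 0; 0, 0], i * w.1 1 1)
  have hw₁ : w'.1 1 1 = 0 := by
    simp only [w', skew_eq_of, Prod.fst_sub, Matrix.sub_apply, Matrix.of_apply, Matrix.cons_val]
    linear_combination -w.1 1 1 * hi
  have hw₂ : w'.2 = 0 := by
    simp only [w', skew_eq_of, Prod.snd_sub, Matrix.of_apply, Matrix.cons_val]
    linear_combination -w.2 * hi
  refine ⟨_, w'.1 0 0, w'.1 0 1, w'.1 1 0, Prod.ext ?_ hw₂⟩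
  exact (Matrix.eta_fin_two w'.1).trans (by rw [hw₁])

theorem exact_skew_pfaff_of_isUnit [IsDomain A] (h : IsUnit (T.a 0 0)) (h₁ : T.E 0 1 ≠ 0)
    (h₂ : IsSMulRegular (A ⧸ Ideal.span {T.E 0 1}) (T.E 1 0))
    (h₃ : IsSMulRegular (A ⧸ Ideal.span {T.E 0 1, T.E 1 0}) (T.E 0 0)) :
    Function.Exact T.skew T.pfaff := by
  refine fun w => ⟨fun hw => ?_, ?_⟩
  · obtain ⟨v, x, y, z, hv⟩ := T.exists_sub_skew_eq h w
    have hxyz : T.E 0 1 * z + T.E 1 0 * y + T.E 0 0 * x = 0 := by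
      have := congrArg T.pfaff hv
      rw [map_sub, pfaff_skew, hw, sub_zero] at this
      simp only [pfaff_apply, Matrix.trace_fin_two, Matrix.mul_apply, Fin.sum_univ_two,
        Matrix.of_apply, Matrix.cons_val] at this
      linear_combination -this
    obtain ⟨u, v', s, rfl, rfl, rfl⟩ := exists_eq_koszul h₁ h₂ h₃ hxyz
    have := T.koszul_mem_range_skew u v' s
    rw [← hv] at this
    simpa using add_mem this (LinearMap.mem_range_self T.skew v)
  · rintro ⟨v, rfl⟩
    exact T.pfaff_skew v

end Unit
end TracelessTriple

section TracelessPart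

variable {A B : Type*} [CommRing A] [Algebra ℂ A] [CommRing B] [Algebra ℂ B]

/-- The traceless part `p - (tr p / 2) • 1` of an endomorphism `p` of a plane. -/
def tracelessPart (p : Matrix (Fin 2) (Fin 2) A) : Matrix (Fin 2) (Fin 2) A :=
  p - ((1 / 2 : ℂ) • p.trace) • 1

theorem tracelessPart_eq_of (p : Matrix (Fin 2) (Fin 2) A) :
    tracelessPart p =
      !![(1 / 2 : ℂ) • (p 0 0 - p 1 1), p 0 1; p 1 0, -((1 / 2 : ℂ) • (p 0 0 - p 1 1))] := by
  ext i j
  fin_cases i <;> fin_cases j <;>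
    simp only [tracelessPart, Matrix.trace_fin_two, Matrix.sub_apply, Matrix.smul_apply,
      Matrix.one_fin_two, Matrix.of_apply, Matrix.cons_val, smul_eq_mul, mul_one, mul_zero,
      Fin.zero_eta, Fin.mk_one] <;>
    module

theorem trace_tracelessPart (p : Matrix (Fin 2) (Fin 2) A) : (tracelessPart p).trace = 0 := by
  rw [tracelessPart_eq_of, Matrix.trace_fin_two_of, add_neg_cancel]

theorem map_tracelessPart (φ : A →ₐ[ℂ] B) (p : Matrix (Fin 2) (Fin 2) A) :
    (tracelessPart p).map φ = tracelessPart (p.map φ) := by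
  ext i j
  fin_cases i <;> fin_cases j <;> simp [tracelessPart_eq_of]

theorem tracelessPart_add_of_trace_eq_zero (p : Matrix (Fin 2) (Fin 2) A)
    {q : Matrix (Fin 2) (Fin 2) A} (hq : q.trace = 0) :
    tracelessPart (p + q) = tracelessPart p + q := by
  rw [tracelessPart, tracelessPart, Matrix.trace_add, hq, add_zero, sub_add_eq_add_sub]

/-- The traceless triple `(p₁ - tr p₁ / 2, p₂ - tr p₂ / 2, a)`. -/
def TracelessTriple.ofMatrices (p₁ p₂ a : Matrix (Fin 2) (Fin 2) A) : TracelessTriple A where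
  q₁ := tracelessPart p₁
  q₂ := tracelessPart p₂
  a := a
  trace_q₁ := trace_tracelessPart p₁
  trace_q₂ := trace_tracelessPart p₂

theorem TracelessTriple.map_ofMatrices (φ : A →ₐ[ℂ] B) (p₁ p₂ a : Matrix (Fin 2) (Fin 2) A) :
    (ofMatrices p₁ p₂ a).map (φ : A →+* B) = ofMatrices (p₁.map φ) (p₂.map φ) (a.map φ) := by
  simp [map, ofMatrices, map_tracelessPart]

end TracelessPart

section Coordinates

/-- The coordinate matrix of `p₁`. -/
def X₁ : Matrix (Fin 2) (Fin 2) R19 := Matrix.of fun i j => X (Sum.inl (i, j))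

/-- The coordinate matrix of `p₂`. -/
def X₂ : Matrix (Fin 2) (Fin 2) R19 := Matrix.of fun i j => X (Sum.inr (Sum.inl (i, j)))

/-- The coordinate matrix of `a`. -/
def X₃ : Matrix (Fin 2) (Fin 2) R19 := Matrix.of fun i j => X (Sum.inr (Sum.inr (i, j)))

variable {B : Type*} [CommRing B] [Algebra ℂ B] (p₁ p₂ a : Matrix (Fin 2) (Fin 2) B)

/-- The homomorphism from the coordinate ring given by a `B`-valued point `(p₁, p₂, a)`. -/
def pointHom : R19 →ₐ[ℂ] B :=
  aeval (Sum.elim (fun ij => p₁ ij.1 ij.2)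
    (Sum.elim (fun ij => p₂ ij.1 ij.2) (fun ij => a ij.1 ij.2)))

theorem map_pointHom_X₁ : X₁.map (pointHom p₁ p₂ a) = p₁ := by
  ext; simp [X₁, pointHom]

theorem map_pointHom_X₂ : X₂.map (pointHom p₁ p₂ a) = p₂ := by
  ext; simp [X₂, pointHom]

theorem map_pointHom_X₃ : X₃.map (pointHom p₁ p₂ a) = a := by
  ext; simp [X₃, pointHom]

theorem pointHom_X₁ (i j : Fin 2) : pointHom p₁ p₂ a (X₁ i j) = p₁ i j :=
  congrFun₂ (map_pointHom_X₁ p₁ p₂ a) i j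

theorem pointHom_X₂ (i j : Fin 2) : pointHom p₁ p₂ a (X₂ i j) = p₂ i j :=
  congrFun₂ (map_pointHom_X₂ p₁ p₂ a) i j

theorem pointHom_X₃ (i j : Fin 2) : pointHom p₁ p₂ a (X₃ i j) = a i j :=
  congrFun₂ (map_pointHom_X₃ p₁ p₂ a) i j

theorem forall_X_of_coords {q : R19 → Prop} (h₁ : ∀ i j, q (X₁ i j)) (h₂ : ∀ i j, q (X₂ i j))
    (h₃ : ∀ i j, q (X₃ i j)) : ∀ k, q (X k)
  | .inl (i, j) => h₁ i j
  | .inr (.inl (i, j)) => h₂ i j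
  | .inr (.inr (i, j)) => h₃ i j

variable {p₁ p₂ a} in
theorem eq_pointHom {φ : R19 →ₐ[ℂ] B} (h₁ : X₁.map φ = p₁) (h₂ : X₂.map φ = p₂)
    (h₃ : X₃.map φ = a) : φ = pointHom p₁ p₂ a := by
  refine algHom_ext (forall_X_of_coords (q := fun f => φ f = pointHom p₁ p₂ a f) ?_ ?_ ?_)
  · exact congrFun₂ (h₁.trans (map_pointHom_X₁ p₁ p₂ a).symm)
  · exact congrFun₂ (h₂.trans (map_pointHom_X₂ p₁ p₂ a).symm)
  · exact congrFun₂ (h₃.trans (map_pointHom_X₃ p₁ p₂ a).symm)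

/-- The traceless triple of the universal point. -/
def generic : TracelessTriple R19 := .ofMatrices X₁ X₂ X₃

theorem map_pointHom_generic :
    generic.map (pointHom p₁ p₂ a : R19 →+* B) = .ofMatrices p₁ p₂ a := by
  rw [generic, TracelessTriple.map_ofMatrices, map_pointHom_X₁, map_pointHom_X₂, map_pointHom_X₃]

/-- Rescaling of the two entries of the first row of `a`. -/
def scale (l m : ℂ) : R19 →ₐ[ℂ] R19 :=
  pointHom X₁ X₂ !![l • X₃ 0 0, m • X₃ 0 1; X₃ 1 0, X₃ 1 1]

variable (l m : ℂ)

theorem scale_X₁ (i j : Fin 2) : scale l m (X₁ i j) = X₁ i j :=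
  pointHom_X₁ _ _ _ i j

theorem scale_X₂ (i j : Fin 2) : scale l m (X₂ i j) = X₂ i j :=
  pointHom_X₂ _ _ _ i j

theorem scale_X₃ (i j : Fin 2) :
    scale l m (X₃ i j) = !![l • X₃ 0 0, m • X₃ 0 1; X₃ 1 0, X₃ 1 1] i j :=
  pointHom_X₃ _ _ _ i j

theorem algHom_ext_of_coords {φ ψ : R19 →ₐ[ℂ] B} (h₁ : ∀ i j, φ (X₁ i j) = ψ (X₁ i j))
    (h₂ : ∀ i j, φ (X₂ i j) = ψ (X₂ i j)) (h₃ : ∀ i j, φ (X₃ i j) = ψ (X₃ i j)) : φ = ψ :=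
  algHom_ext (forall_X_of_coords (q := fun f => φ f = ψ f) h₁ h₂ h₃)

theorem scale_comp_scale (l' m' : ℂ) :
    (scale l m).comp (scale l' m') = scale (l * l') (m * m') := by
  refine algHom_ext_of_coords (fun i j => ?_) (fun i j => ?_) fun i j => ?_
  · simp only [AlgHom.comp_apply, scale_X₁]
  · simp only [AlgHom.comp_apply, scale_X₂]
  · fin_cases i <;> fin_cases j <;> simp [scale_X₃, smul_smul, mul_comm]

theorem scale_one_one : scale 1 1 = AlgHom.id ℂ R19 := by
  refine algHom_ext_of_coords (scale_X₁ 1 1) (scale_X₂ 1 1) fun i j => ?_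
  fin_cases i <;> fin_cases j <;> simp [scale_X₃]

theorem algHom_sub_mem {σ R B : Type*} [CommRing R] [CommRing B] [Algebra R B]
    {φ ψ : MvPolynomial σ R →ₐ[R] B} {J : Ideal B} (h : ∀ k, φ (X k) - ψ (X k) ∈ J)
    (f : MvPolynomial σ R) : φ f - ψ f ∈ J :=
  have h' : (Ideal.Quotient.mkₐ R J).comp φ = (Ideal.Quotient.mkₐ R J).comp ψ :=
    algHom_ext fun k => Ideal.Quotient.eq.2 (h k)
  Ideal.Quotient.eq.1 (AlgHom.congr_fun h' f)

theorem sub_scale_mem {l m : ℂ} {J : Ideal R19} (hl : (1 - l) • X₃ 0 0 ∈ J)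
    (hm : (1 - m) • X₃ 0 1 ∈ J) (f : R19) : f - scale l m f ∈ J := by
  refine algHom_sub_mem (φ := AlgHom.id ℂ R19) (forall_X_of_coords
    (q := fun f => f - scale l m f ∈ J) (fun i j => ?_) (fun i j => ?_) fun i j => ?_) f
  · simp [scale_X₁]
  · simp [scale_X₂]
  · rw [sub_smul, one_smul] at hl hm
    fin_cases i <;> fin_cases j <;> simp [scale_X₃, hl, hm]

end Coordinates

section Discriminant

theorem det_tracelessPart {A : Type*} [CommRing A] [Algebra ℂ A] (p : Matrix (Fin 2) (Fin 2) A) :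
    (tracelessPart p).det = -((1 / 2 : ℂ) • (p 0 0 - p 1 1)) ^ 2 - p 0 1 * p 1 0 := by
  rw [tracelessPart_eq_of, Matrix.det_fin_two_of]
  ring

theorem generic_D_eq : generic.D = -X₁ 0 1 * X₁ 1 0 +
    (((1 / 2 : ℂ) • (X₂ 0 0 - X₂ 1 1)) ^ 2 - ((1 / 2 : ℂ) • (X₁ 0 0 - X₁ 1 1)) ^ 2
      + X₂ 0 1 * X₂ 1 0) := by
  rw [generic, TracelessTriple.D, TracelessTriple.ofMatrices, det_tracelessPart, det_tracelessPart]
  ring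

theorem prime_generic_D : Prime generic.D := by
  rw [← UniqueFactorizationMonoid.irreducible_iff_prime, generic_D_eq]
  refine irreducible_mul_X_add _ _ _ (neg_ne_zero.2 (X_ne_zero _)) ?_ ?_ ?_
  · simp [X₁, vars_neg, vars_X]
  · have h {k : Idx19} (hk : k ≠ .inl (1, 0)) : (X k : R19) ∈ supported ℂ {.inl (1, 0)}ᶜ :=
      X_mem_supported.2 hk
    have notMem_vars {f : R19} (hf : f ∈ supported ℂ {.inl (1, 0)}ᶜ) : .inl (1, 0) ∉ f.vars :=
      fun hmem => mem_supported.1 hf hmem rfl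
    refine notMem_vars (add_mem (sub_mem ?_ ?_) (mul_mem ?_ ?_))
    · exact pow_mem (Subalgebra.smul_mem _ (sub_mem (h (by decide)) (h (by decide))) _) 2
    · exact pow_mem (Subalgebra.smul_mem _ (sub_mem (h (by decide)) (h (by decide))) _) 2
    all_goals exact h (by decide)
  · have hX : Irreducible (X₁ 0 1) := X_prime.irreducible
    refine (hX.isRelPrime_iff_not_dvd.2 fun h => ?_).neg_left
    have hdvd := map_dvd (pointHom (B := ℂ) !![2, 0; 0, 0] 0 0) h
    simp [pointHom_X₁, pointHom_X₂] at hdvd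

/-- The generic triple with the two entries of the first row of `a` rescaled; the scalar `0`
specialises an entry to zero. -/
def rescaledGeneric (l m : ℂ) : TracelessTriple R19 := generic.map (scale l m : R19 →+* R19)

theorem rescaledGeneric_eq (l m : ℂ) : rescaledGeneric l m =
    .ofMatrices X₁ X₂ !![l • X₃ 0 0, m • X₃ 0 1; X₃ 1 0, X₃ 1 1] :=
  map_pointHom_generic _ _ _

theorem rescaledGeneric_D (l m : ℂ) : (rescaledGeneric l m).D = generic.D := by
  rw [rescaledGeneric_eq]; rfl

theorem map_scale_rescaledGeneric (l m l' m' : ℂ) :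
    (rescaledGeneric l m).map (scale l' m' : R19 →+* R19) = rescaledGeneric (l' * l) (m' * m) := by
  rw [rescaledGeneric, TracelessTriple.map_map, rescaledGeneric, ← scale_comp_scale]; rfl

theorem rescaledGeneric_one_one : rescaledGeneric 1 1 = generic := by
  rw [rescaledGeneric, scale_one_one]; rfl

theorem not_dvd_adjugate_rescaledGeneric_E (l m : ℂ) :
    ¬generic.D ∣ (rescaledGeneric l m).E.adjugate 1 1 := fun h => by
  have hdvd := map_dvd (pointHom (B := ℂ) !![0, 1; 0, 0] 0 !![0, 0; 1, 0]) h
  rw [generic_D_eq, rescaledGeneric_eq, TracelessTriple.E_eq_of] at hdvd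
  simp [TracelessTriple.ofMatrices, tracelessPart_eq_of, pointHom_X₁, pointHom_X₂, pointHom_X₃,
    Matrix.adjugate_fin_two_of] at hdvd

theorem exact_socle_skew_rescaledGeneric (l m : ℂ) :
    Function.Exact (rescaledGeneric l m).socle (rescaledGeneric l m).skew :=
  (rescaledGeneric l m).exact_socle_skew ((rescaledGeneric_D l m).symm ▸ prime_generic_D)
    (i := 1) (j := 1) ((rescaledGeneric_D l m).symm ▸ not_dvd_adjugate_rescaledGeneric_E l m)

end Discriminant

section Shift

theorem TracelessTriple.E_ofMatrices_add {A : Type*} [CommRing A] [Algebra ℂ A]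
    (p₁ p₂ a : Matrix (Fin 2) (Fin 2) A) {n₁ n₂ : Matrix (Fin 2) (Fin 2) A}
    (h₁ : n₁.trace = 0) (h₂ : n₂.trace = 0) :
    (ofMatrices (p₁ + n₁) (p₂ + n₂) a).E = (ofMatrices p₁ p₂ a).E + (n₁ * a - a * n₂) := by
  simp only [E, ofMatrices, tracelessPart_add_of_trace_eq_zero _ h₁,
    tracelessPart_add_of_trace_eq_zero _ h₂]
  noncomm_ring

theorem isSMulRegular_quotient_of_sub_mem {A : Type*} [CommRing A] [IsDomain A] {J : Ideal A}
    {κ : A →+* A} (hκ : ∀ f, f - κ f ∈ J) (hJ : J ≤ RingHom.ker κ) {e : A} (he : κ e ≠ 0) :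
    IsSMulRegular (A ⧸ J) e := by
  rw [isSMulRegular_quotient_iff_mem_of_smul_mem]
  intro f hf
  have h : κ e * κ f = 0 := by rw [← map_mul]; exact hJ hf
  have hf₀ : κ f = 0 := (mul_eq_zero.1 h).resolve_left he
  simpa [hf₀] using hκ f

variable {L : Type*} [CommRing L] [Algebra ℂ L] [Algebra R19 L]

/-- The coordinates of `p₁` and `p₂` are shifted by `n₁` and `n₂`, those of `a` are kept. -/
def shiftHom (n₁ n₂ : Matrix (Fin 2) (Fin 2) L) : R19 →ₐ[ℂ] L :=
  pointHom (X₁.map (algebraMap R19 L) + n₁) (X₂.map (algebraMap R19 L) + n₂)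
    (X₃.map (algebraMap R19 L))

section ShiftHom

variable {n₁ n₂ : Matrix (Fin 2) (Fin 2) L}

theorem shiftHom_X₃ (i j : Fin 2) : shiftHom n₁ n₂ (X₃ i j) = algebraMap R19 L (X₃ i j) :=
  pointHom_X₃ _ _ _ i j

variable [IsScalarTower ℂ R19 L]

theorem algebraMap_sub_shiftHom_mem {J : Ideal L} (h₁ : ∀ i j, n₁ i j ∈ J)
    (h₂ : ∀ i j, n₂ i j ∈ J) (f : R19) : algebraMap R19 L f - shiftHom n₁ n₂ f ∈ J := by
  let α : R19 →ₐ[ℂ] L := IsScalarTower.toAlgHom ℂ R19 L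
  refine algHom_sub_mem (φ := α) (forall_X_of_coords (q := fun f => α f - shiftHom n₁ n₂ f ∈ J)
    (fun i j => ?_) (fun i j => ?_) fun i j => ?_) f
  · simp [α, shiftHom, pointHom_X₁, h₁ i j]
  · simp [α, shiftHom, pointHom_X₂, h₂ i j]
  · simp [α, shiftHom_X₃]

theorem map_shiftHom_E (t₁ : n₁.trace = 0) (t₂ : n₂.trace = 0) (l m : ℂ) :
    ((rescaledGeneric l m).map (shiftHom n₁ n₂ : R19 →+* L)).E =
      ((rescaledGeneric l m).map (algebraMap R19 L)).E +
        (n₁ * ((rescaledGeneric l m).map (algebraMap R19 L)).a -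
          ((rescaledGeneric l m).map (algebraMap R19 L)).a * n₂) := by
  let α : R19 →ₐ[ℂ] L := IsScalarTower.toAlgHom ℂ R19 L
  let a : Matrix (Fin 2) (Fin 2) R19 := !![l • X₃ 0 0, m • X₃ 0 1; X₃ 1 0, X₃ 1 1]
  have ha : a.map (shiftHom n₁ n₂) = a.map α := by
    ext i j
    have hX₃ (i j) : shiftHom n₁ n₂ (X₃ i j) = α (X₃ i j) := shiftHom_X₃ i j
    fin_cases i <;> fin_cases j <;> simp [a, hX₃]
  have h : (rescaledGeneric l m).map (algebraMap R19 L) =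
      .ofMatrices (X₁.map α) (X₂.map α) (a.map α) := by
    rw [rescaledGeneric_eq, ← TracelessTriple.map_ofMatrices]; rfl
  rw [h, rescaledGeneric_eq, TracelessTriple.map_ofMatrices, ha, shiftHom, map_pointHom_X₁,
    map_pointHom_X₂]
  exact TracelessTriple.E_ofMatrices_add _ _ _ t₁ t₂

end ShiftHom

theorem exists_algHom_extending [IsScalarTower ℂ R19 L] {x : R19} [IsLocalization.Away x L]
    (φ : R19 →ₐ[ℂ] L) (hx : φ x = algebraMap R19 L x) {J : Ideal L}
    (hφ : ∀ f, algebraMap R19 L f - φ f ∈ J) :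
    ∃ κ : L →ₐ[ℂ] L, (∀ f, κ (algebraMap R19 L f) = φ f) ∧ ∀ f, f - κ f ∈ J := by
  have hunit (y : Submonoid.powers x) : IsUnit (φ y) := by
    obtain ⟨_, n, rfl⟩ := y
    rw [map_pow, hx]
    exact (IsLocalization.Away.algebraMap_isUnit x).pow n
  let κ : L →ₐ[ℂ] L := IsLocalization.liftAlgHom (M := Submonoid.powers x) hunit
  have hκ (f : R19) : κ (algebraMap R19 L f) = φ f := IsLocalization.lift_eq _ f
  have h : (Ideal.Quotient.mk J).comp κ.toRingHom = Ideal.Quotient.mk J := by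
    refine IsLocalization.ringHom_ext (Submonoid.powers x) (RingHom.ext fun f => ?_)
    exact (congrArg _ (hκ f)).trans (Ideal.Quotient.eq.2 (hφ f)).symm
  exact ⟨κ, hκ, fun f => Ideal.Quotient.eq.1 (RingHom.congr_fun h f).symm⟩

end Shift

section ChartOfFirstEntry

theorem rescaledGeneric_E_ne_zero (m : ℂ) {i j : Fin 2} (hij : ¬(i = 1 ∧ j = 1)) :
    (rescaledGeneric 1 m).E i j ≠ 0 := fun h => by
  have h' : (pointHom !![2, 0; 1, 0] !![0, -1; 0, 0] !![1, 0; 0, 0] : R19 →ₐ[ℂ] ℂ)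
      ((rescaledGeneric 1 m).E i j) = !![1, 1; 1, 0] i j := by
    rw [rescaledGeneric_eq, TracelessTriple.E_eq_of]
    fin_cases i <;> fin_cases j <;>
    simp [TracelessTriple.ofMatrices, tracelessPart_eq_of, pointHom_X₁, pointHom_X₂, pointHom_X₃]
  rw [h, map_zero] at h'
  fin_cases i <;> fin_cases j <;> simp at h' hij

section Away

variable {L : Type*} [CommRing L] [Algebra R19 L] {T : TracelessTriple L} {m : ℂ}
  (hT : T = (rescaledGeneric 1 m).map (algebraMap R19 L))
include hT

theorem E_ne_zero [FaithfulSMul R19 L] {i j : Fin 2} (hij : ¬(i = 1 ∧ j = 1)) : T.E i j ≠ 0 := by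
  rw [hT, TracelessTriple.map_E]
  exact (map_ne_zero_iff _ (FaithfulSMul.algebraMap_injective R19 L)).2
    (rescaledGeneric_E_ne_zero m hij)

variable [IsLocalization.Away (X₃ 0 0) L]

theorem isUnit_a_zero_zero : IsUnit (T.a 0 0) := by
  have h : T.a 0 0 = algebraMap R19 L (X₃ 0 0) := by
    rw [hT, rescaledGeneric_eq, one_smul]; rfl
  rw [h]
  exact IsLocalization.Away.algebraMap_isUnit _

variable [Algebra ℂ L] [IsScalarTower ℂ R19 L]

-- As `a₀₀` is a unit, `E₀₁` and `E₁₀` can replace an entry of `p₂` and one of `p₁` as coordinates.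
theorem exists_ringHom_shifting_E {J : Ideal L} {x y : L} (hx : x ∈ J) (hy : y ∈ J) :
    ∃ κ : L →+* L, (∀ f, f - κ f ∈ J) ∧ κ (T.E 0 0) = T.E 0 0 ∧ κ (T.E 0 1) = T.E 0 1 - x ∧
      κ (T.E 1 0) = T.E 1 0 - y := by
  obtain ⟨i, hi⟩ := (isUnit_a_zero_zero hT).exists_right_inv
  let n₁ : Matrix (Fin 2) (Fin 2) L := !![0, 0; -(i * y), 0]
  let n₂ : Matrix (Fin 2) (Fin 2) L := !![0, i * x; 0, 0]
  have h₁ (k l) : n₁ k l ∈ J := by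
    fin_cases k <;> fin_cases l <;> simp [n₁, J.mul_mem_left i hy]
  have h₂ (k l) : n₂ k l ∈ J := by
    fin_cases k <;> fin_cases l <;> simp [n₂, J.mul_mem_left i hx]
  obtain ⟨κ, hκ, hκJ⟩ := exists_algHom_extending (x := X₃ 0 0) (shiftHom n₁ n₂)
    (shiftHom_X₃ 0 0) (algebraMap_sub_shiftHom_mem h₁ h₂)
  have hE : (T.map (κ : L →+* L)).E = T.E + (n₁ * T.a - T.a * n₂) := by
    have hκT : T.map (κ : L →+* L) = (rescaledGeneric 1 m).map (shiftHom n₁ n₂ : R19 →+* L) := by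
      rw [hT, TracelessTriple.map_map]
      exact congrArg (TracelessTriple.map · _) (RingHom.ext hκ)
    rw [hκT, hT, map_shiftHom_E (by simp [n₁]) (by simp [n₂])]
  rw [TracelessTriple.map_E] at hE
  have hE' (k l) : (κ : L →+* L) (T.E k l) = T.E k l + (n₁ * T.a - T.a * n₂) k l := congrFun₂ hE k l
  refine ⟨κ, hκJ, ?_, ?_, ?_⟩ <;>
    simp only [hE', n₁, n₂, Matrix.sub_apply, Matrix.mul_apply, Fin.sum_univ_two, Matrix.of_apply,
      Matrix.cons_val]
  · ring
  · linear_combination -x * hi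
  · linear_combination -y * hi

variable [IsDomain L] [FaithfulSMul R19 L]

theorem isSMulRegular_E_one_zero : IsSMulRegular (L ⧸ Ideal.span {T.E 0 1}) (T.E 1 0) := by
  obtain ⟨κ, hκJ, -, h₁, h₂⟩ := exists_ringHom_shifting_E hT
    (Ideal.mem_span_singleton_self (T.E 0 1)) (Ideal.zero_mem _)
  refine isSMulRegular_quotient_of_sub_mem hκJ ((Ideal.span_singleton_le_iff_mem _).2 ?_) ?_
  · rw [RingHom.mem_ker, h₁, sub_self]
  · rw [h₂, sub_zero]
    exact E_ne_zero hT (by decide)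

theorem isSMulRegular_E_zero_zero :
    IsSMulRegular (L ⧸ Ideal.span {T.E 0 1, T.E 1 0}) (T.E 0 0) := by
  obtain ⟨κ, hκJ, h₀, h₁, h₂⟩ :=
    exists_ringHom_shifting_E hT (J := Ideal.span {T.E 0 1, T.E 1 0})
      (Ideal.subset_span (Set.mem_insert _ _)) (Ideal.subset_span (Set.mem_insert_of_mem _ rfl))
  refine isSMulRegular_quotient_of_sub_mem hκJ (Ideal.span_le.2 ?_) ?_
  · exact Set.insert_subset (RingHom.mem_ker.2 (by rw [h₁, sub_self]))
      (Set.singleton_subset_iff.2 (RingHom.mem_ker.2 (by rw [h₂, sub_self])))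
  · rw [h₀]
    exact E_ne_zero hT (by decide)

end Away

theorem exact_skew_pfaff_rescaledGeneric (m : ℂ) :
    Function.Exact (rescaledGeneric 1 m).skew (rescaledGeneric 1 m).pfaff := by
  have hX : X₃ 0 0 ≠ 0 := X_ne_zero _
  refine TracelessTriple.exact_skew_pfaff_of_localization (L := Localization.Away (X₃ 0 0)) _ hX
    ?_ ?_
  · refine TracelessTriple.isSMulRegular_coker_skew (κ := scale 0 1) _ (fun f => ?_) ?_ hX ?_
    · refine Ideal.mem_span_singleton.1 (sub_scale_mem ?_ ?_ f)
      · simp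
      · simp
    · simp [scale_X₃]
    · rw [map_scale_rescaledGeneric]
      exact exact_socle_skew_rescaledGeneric _ _
  · have : IsDomain (Localization.Away (X₃ 0 0)) :=
      IsLocalization.isDomain_localization (powers_le_nonZeroDivisors_of_noZeroDivisors hX)
    have : FaithfulSMul R19 (Localization.Away (X₃ 0 0)) := by
      rw [faithfulSMul_iff_algebraMap_injective]
      exact IsLocalization.injective _ (powers_le_nonZeroDivisors_of_noZeroDivisors hX)
    exact TracelessTriple.exact_skew_pfaff_of_isUnit _ (isUnit_a_zero_zero rfl)
      (E_ne_zero rfl (by decide)) (isSMulRegular_E_one_zero rfl) (isSMulRegular_E_zero_zero rfl)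

theorem isSMulRegular_X₃_zero_one_coker_pfaff :
    IsSMulRegular (R19 ⧸ LinearMap.range generic.pfaff) (X₃ 0 1) := by
  rw [← rescaledGeneric_one_one]
  refine TracelessTriple.isSMulRegular_coker_pfaff (κ := scale 1 0) _ (fun f => ?_) ?_
    (X_ne_zero _) ?_
  · refine Ideal.mem_span_singleton.1 (sub_scale_mem ?_ ?_ f)
    · simp
    · simp
  · simp [scale_X₃]
  · rw [map_scale_rescaledGeneric, one_mul]
    exact exact_skew_pfaff_rescaledGeneric _

end ChartOfFirstEntry

namespace TracelessTriple

variable {A : Type*} [CommRing A] (T : TracelessTriple A)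

theorem pfaff_eq_zero (hE : T.E = 0) (hD : T.D = 0) (w : PfaffTerm A) : T.pfaff w = 0 := by
  rw [pfaff_apply, hE, hD, zero_mul, Matrix.trace_zero, zero_mul, add_zero]

theorem E_mem_range_pfaff (i j : Fin 2) : T.E i j ∈ LinearMap.range T.pfaff :=
  ⟨(Matrix.single j i 1, 0), by simp [pfaff_apply, Matrix.trace_mul_single]⟩

theorem D_eq_zero_of_E_eq_zero (hE : T.E = 0) {i j : Fin 2} (h : IsUnit (T.a i j)) : T.D = 0 := by
  have hDa : T.D • T.a = 0 := by
    simpa [hE] using T.q₁_mul_E_add.symm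
  exact h.mul_left_eq_zero.1 (congrFun₂ hDa i j)

theorem exists_shift_E_eq_zero [Algebra ℂ A] (h : IsUnit (T.a 0 1)) {J : Ideal A}
    (hJ : ∀ i j, T.E i j ∈ J) :
    ∃ n₁ n₂ : Matrix (Fin 2) (Fin 2) A, (∀ i j, n₁ i j ∈ J) ∧ (∀ i j, n₂ i j ∈ J) ∧
      n₁.trace = 0 ∧ n₂.trace = 0 ∧ T.E + (n₁ * T.a - T.a * n₂) = 0 := by
  obtain ⟨b, hb⟩ := h.exists_right_inv
  let e := (1 / 2 : ℂ) • (b * T.E 0 1)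
  have he : e + e = b * T.E 0 1 := by rw [← add_smul]; norm_num
  have heJ : e ∈ J := Submodule.smul_of_tower_mem J _ (J.mul_mem_left b (hJ 0 1))
  refine ⟨!![-e, 0; -(b * T.E 1 1), e], !![-e, 0; b * T.E 0 0, e], fun i j => ?_, fun i j => ?_,
    by simp, by simp, ?_⟩
  · fin_cases i <;> fin_cases j <;> simp [heJ, J.mul_mem_left b, hJ]
  · fin_cases i <;> fin_cases j <;> simp [heJ, J.mul_mem_left b, hJ]
  · have htr := T.trace_E_mul_adjugate
    simp only [Matrix.trace_fin_two, Matrix.mul_apply, Fin.sum_univ_two, Matrix.adjugate_fin_two,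
      Matrix.of_apply, Matrix.cons_val] at htr
    ext i j
    fin_cases i <;> fin_cases j <;>
      simp only [Matrix.add_apply, Matrix.sub_apply, Matrix.mul_apply, Fin.sum_univ_two,
        Matrix.of_apply, Matrix.cons_val, Fin.zero_eta, Fin.mk_one, Matrix.zero_apply]
    · linear_combination -T.E 0 0 * hb
    · linear_combination -T.E 0 1 * hb - T.a 0 1 * he
    · linear_combination -T.E 1 0 * hb + T.a 1 0 * he - b * htr
    · linear_combination -T.E 1 1 * hb

end TracelessTriple

section ChartOfSecondEntry

theorem eq_zero_of_forall_algHom_eq_zero {σ K L : Type*} [Field K] [Infinite K] [CommRing L]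
    [Algebra K L] [Algebra (MvPolynomial σ K) L] [IsScalarTower K (MvPolynomial σ K) L]
    (x : MvPolynomial σ K) [IsLocalization.Away x L] {g : L} (hg : ∀ χ : L →ₐ[K] K, χ g = 0) :
    g = 0 := by
  obtain ⟨n, h, hn⟩ := IsLocalization.Away.surj x g
  have hxh : x * h = 0 := MvPolynomial.funext fun p => by
    rw [map_mul, map_zero]
    refine mul_eq_zero.2 (or_iff_not_imp_left.2 fun hx => ?_)
    have hunit (y : Submonoid.powers x) : IsUnit (aeval p (y : MvPolynomial σ K)) := by
      obtain ⟨_, k, rfl⟩ := y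
      rw [map_pow]
      exact (IsUnit.mk0 _ hx).pow k
    let χ : L →ₐ[K] K := IsLocalization.liftAlgHom (M := Submonoid.powers x) hunit
    have hχ : χ (algebraMap _ L h) = aeval p h := IsLocalization.lift_eq _ h
    rw [← hn, map_mul, hg, zero_mul] at hχ
    exact hχ.symm
  have hx : IsUnit (algebraMap (MvPolynomial σ K) L x) := IsLocalization.Away.algebraMap_isUnit x
  have hL : algebraMap _ L h = 0 := hx.mul_right_eq_zero.1 (by rw [← map_mul, hxh, map_zero])
  rw [hL] at hn
  exact (hx.pow n).mul_left_eq_zero.1 hn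

/-- The difference of the traces of `p₁` and `p₂`. -/
def traceDiff : R19 := X₁.trace - X₂.trace

theorem pointHom_traceDiff {B : Type*} [CommRing B] [Algebra ℂ B]
    (p₁ p₂ a : Matrix (Fin 2) (Fin 2) B) :
    pointHom p₁ p₂ a traceDiff = p₁.trace - p₂.trace := by
  simp [traceDiff, Matrix.trace_fin_two, pointHom_X₁, pointHom_X₂]

variable (L : Type*) [CommRing L] [Algebra ℂ L] [Algebra R19 L] [IsScalarTower ℂ R19 L]

theorem exists_algHom_straightening [IsLocalization.Away (X₃ 0 1) L] :
    ∃ θ : R19 →ₐ[ℂ] L, (generic.map (θ : R19 →+* L)).E = 0 ∧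
      (generic.map (θ : R19 →+* L)).D = 0 ∧ θ traceDiff = algebraMap R19 L traceDiff ∧
      RingHom.ker θ = LinearMap.range generic.pfaff := by
  let T := generic.map (algebraMap R19 L)
  let I : Ideal R19 := LinearMap.range generic.pfaff
  have hb : IsUnit (algebraMap R19 L (X₃ 0 1)) := IsLocalization.Away.algebraMap_isUnit _
  have hJ (i j) : T.E i j ∈ I.map (algebraMap R19 L) := by
    rw [TracelessTriple.map_E]
    exact Ideal.mem_map_of_mem _ (generic.E_mem_range_pfaff i j)
  obtain ⟨n₁, n₂, h₁, h₂, t₁, t₂, hE⟩ := T.exists_shift_E_eq_zero hb hJ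
  have hθE : (generic.map (shiftHom n₁ n₂ : R19 →+* L)).E = 0 := by
    rw [← rescaledGeneric_one_one, map_shiftHom_E t₁ t₂, rescaledGeneric_one_one, hE]
  have hθD : (generic.map (shiftHom n₁ n₂ : R19 →+* L)).D = 0 :=
    TracelessTriple.D_eq_zero_of_E_eq_zero _ hθE (i := 0) (j := 1)
      ((congrArg IsUnit (shiftHom_X₃ (n₁ := n₁) (n₂ := n₂) 0 1)).mpr hb)
  refine ⟨shiftHom n₁ n₂, hθE, hθD, ?_, le_antisymm (fun f hf => ?_) ?_⟩
  · have h₁' : (X₁.map (algebraMap R19 L) + n₁).trace = algebraMap R19 L X₁.trace := by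
      rw [Matrix.trace_add, t₁, add_zero, AddMonoidHom.map_trace]
    have h₂' : (X₂.map (algebraMap R19 L) + n₂).trace = algebraMap R19 L X₂.trace := by
      rw [Matrix.trace_add, t₂, add_zero, AddMonoidHom.map_trace]
    rw [shiftHom, pointHom_traceDiff, h₁', h₂', ← map_sub, traceDiff]
  · have hfL : algebraMap R19 L f ∈ I.map (algebraMap R19 L) := by
      simpa [RingHom.mem_ker.1 hf] using algebraMap_sub_shiftHom_mem h₁ h₂ f
    obtain ⟨_, ⟨n, rfl⟩, hn⟩ :=
      (IsLocalization.algebraMap_mem_map_algebraMap_iff (Submonoid.powers (X₃ 0 1)) L I f).1 hfL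
    exact mem_of_isSMulRegular_quotient_of_smul_mem
      (isSMulRegular_X₃_zero_one_coker_pfaff.pow n) hn
  · rintro _ ⟨w, rfl⟩
    exact (generic.map_pfaff _ w).trans (TracelessTriple.pfaff_eq_zero _ hθE hθD _)

end ChartOfSecondEntry

section VanishingIdeal

theorem eval_coords19 (t : Pt19) : eval (coords19 t) = (pointHom t.1 t.2.1 t.2.2 : R19 →+* ℂ) := by
  rw [pointHom, coe_aeval_eq_eval]; rfl

namespace TracelessTriple

variable {A : Type*} [CommRing A] [Algebra ℂ A] {p₁ p₂ : Matrix (Fin 2) (Fin 2) A}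
  (h : p₁.trace = p₂.trace) (a : Matrix (Fin 2) (Fin 2) A)
include h

theorem E_ofMatrices_of_trace_eq : (ofMatrices p₁ p₂ a).E = p₁ * a - a * p₂ := by
  simp [E, ofMatrices, tracelessPart, h, sub_mul, mul_sub]

theorem D_ofMatrices_of_trace_eq : (ofMatrices p₁ p₂ a).D = p₁.det - p₂.det := by
  have hdet (p : Matrix (Fin 2) (Fin 2) A) :
      (tracelessPart p).det = p.det - (1 / 4 : ℂ) • p.trace ^ 2 := by
    rw [det_tracelessPart, Matrix.det_fin_two, Matrix.trace_fin_two]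
    have hq : 4 * algebraMap ℂ A (1 / 4) = 1 := by
      rw [← map_ofNat (algebraMap ℂ A) 4, ← map_mul]; norm_num
    have hh : algebraMap ℂ A (1 / 2) ^ 2 = algebraMap ℂ A (1 / 4) := by rw [← map_pow]; norm_num
    rw [Algebra.smul_def, Algebra.smul_def, mul_pow, hh]
    linear_combination p 0 0 * p 1 1 * hq
  simp [D, ofMatrices, hdet, h]

end TracelessTriple

theorem mem_C19_iff {t : Pt19} : t ∈ C19 ↔ t.1.trace = t.2.1.trace ∧
    (TracelessTriple.ofMatrices t.1 t.2.1 t.2.2).E = 0 ∧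
      (TracelessTriple.ofMatrices t.1 t.2.1 t.2.2).D = 0 := by
  have hE (h : t.1.trace = t.2.1.trace) := TracelessTriple.E_ofMatrices_of_trace_eq h t.2.2
  have hD (h : t.1.trace = t.2.1.trace) := TracelessTriple.D_ofMatrices_of_trace_eq h t.2.2
  refine ⟨fun ⟨hinter, hdet, htr⟩ => ⟨htr, ?_, ?_⟩, fun ⟨htr, hE₀, hD₀⟩ => ⟨?_, ?_, htr⟩⟩
  · rw [hE htr, hinter, sub_self]
  · rw [hD htr, hdet, sub_self]
  · rw [hE htr] at hE₀
    exact (sub_eq_zero.1 hE₀).symm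
  · rw [hD htr] at hD₀
    exact sub_eq_zero.1 hD₀

theorem mem_J19_iff {f : R19} : f ∈ J19 ↔ ∀ φ : R19 →ₐ[ℂ] ℂ,
    φ traceDiff = 0 → (generic.map (φ : R19 →+* ℂ)).E = 0 → (generic.map (φ : R19 →+* ℂ)).D = 0 →
      φ f = 0 := by
  refine ⟨fun hf φ ht hE hD => ?_, fun hf t ht => ?_⟩
  · obtain ⟨p₁, p₂, a, rfl⟩ : ∃ p₁ p₂ a, φ = pointHom p₁ p₂ a := ⟨_, _, _, eq_pointHom rfl rfl rfl⟩
    rw [map_pointHom_generic] at hE hD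
    rw [pointHom_traceDiff, sub_eq_zero] at ht
    have := hf (p₁, p₂, a) (mem_C19_iff.2 ⟨ht, hE, hD⟩)
    rwa [eval_coords19] at this
  · obtain ⟨ht, hE, hD⟩ := mem_C19_iff.1 ht
    rw [eval_coords19]
    refine hf (pointHom t.1 t.2.1 t.2.2) ?_ ?_ ?_
    · rw [pointHom_traceDiff, ht, sub_self]
    · rwa [map_pointHom_generic]
    · rwa [map_pointHom_generic]

theorem isSMulRegular_traceDiff_coker_pfaff :
    IsSMulRegular (R19 ⧸ LinearMap.range generic.pfaff) traceDiff := by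
  let L := Localization.Away (X₃ 0 1)
  have hX : X₃ 0 1 ≠ 0 := X_ne_zero _
  have hpow := powers_le_nonZeroDivisors_of_noZeroDivisors hX
  have : IsDomain L := IsLocalization.isDomain_localization hpow
  obtain ⟨θ, -, -, hθt, hθ⟩ := exists_algHom_straightening L
  have ht : θ traceDiff ≠ 0 := by
    rw [hθt, map_ne_zero_iff _ (IsLocalization.injective L hpow)]
    intro h
    simpa [pointHom_traceDiff] using congrArg (pointHom (B := ℂ) !![1, 0; 0, 0] 0 0) h
  rw [isSMulRegular_quotient_iff_mem_of_smul_mem, ← hθ]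
  intro f hf
  exact (mul_eq_zero.1 ((map_mul θ _ _).symm.trans hf)).resolve_left ht

/-- Substitution of a point with the same traceless parts and equal traces. -/
def equalizeTraces : R19 →ₐ[ℂ] R19 :=
  pointHom (X₁ - ((1 / 4 : ℂ) • traceDiff) • 1) (X₂ + ((1 / 4 : ℂ) • traceDiff) • 1) X₃

theorem tracelessPart_add_smul_one {A : Type*} [CommRing A] [Algebra ℂ A]
    (p : Matrix (Fin 2) (Fin 2) A) (x : A) : tracelessPart (p + x • 1) = tracelessPart p := by
  ext i j
  fin_cases i <;> fin_cases j <;> simp [tracelessPart_eq_of]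

theorem map_equalizeTraces_generic :
    generic.map (equalizeTraces : R19 →+* R19) = generic := by
  rw [equalizeTraces, map_pointHom_generic, generic, TracelessTriple.ofMatrices,
    TracelessTriple.ofMatrices]
  simp only [sub_eq_add_neg, ← neg_smul, tracelessPart_add_smul_one]

theorem equalizeTraces_traceDiff : equalizeTraces traceDiff = 0 := by
  rw [equalizeTraces, pointHom_traceDiff, Matrix.trace_sub, Matrix.trace_add, Matrix.trace_smul,
    Matrix.trace_one, traceDiff]
  simp only [Fintype.card_fin, Nat.cast_ofNat, smul_eq_mul, mul_two]
  module

theorem sub_equalizeTraces_mem (f : R19) : f - equalizeTraces f ∈ Ideal.span {traceDiff} := by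
  have ht : traceDiff ∈ Ideal.span {traceDiff} := Ideal.mem_span_singleton_self _
  have hmem (c : ℂ) (i j : Fin 2) :
      ((c • traceDiff) • (1 : Matrix (Fin 2) (Fin 2) R19)) i j ∈ Ideal.span {traceDiff} :=
    Ideal.mul_mem_right _ _ (Submodule.smul_of_tower_mem _ _ ht)
  refine algHom_sub_mem (φ := AlgHom.id ℂ R19) (forall_X_of_coords
    (q := fun f => f - equalizeTraces f ∈ Ideal.span {traceDiff})
    (fun i j => ?_) (fun i j => ?_) fun i j => ?_) f
  · rw [equalizeTraces, pointHom_X₁, Matrix.sub_apply, sub_sub_cancel]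
    exact hmem _ i j
  · rw [equalizeTraces, pointHom_X₂, Matrix.add_apply, sub_add_cancel_left]
    exact neg_mem (hmem _ i j)
  · rw [equalizeTraces, pointHom_X₃, sub_self]
    exact zero_mem _

theorem J19_eq : J19 = Ideal.span {traceDiff} ⊔ LinearMap.range generic.pfaff := by
  refine le_antisymm (fun f hf => ?_) (sup_le ?_ ?_)
  · obtain ⟨θ, hE, hD, -, hθ⟩ := exists_algHom_straightening (Localization.Away (X₃ 0 1))
    have hθf : θ (equalizeTraces f) = 0 := by
      refine eq_zero_of_forall_algHom_eq_zero (X₃ 0 1) fun χ => ?_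
      let φ : R19 →ₐ[ℂ] ℂ := (χ.comp θ).comp equalizeTraces
      have hφ : generic.map (φ : R19 →+* ℂ) =
          (generic.map (θ : R19 →+* _)).map (χ : Localization.Away (X₃ 0 1) →+* ℂ) := by
        conv_rhs => rw [← map_equalizeTraces_generic]
        simp only [TracelessTriple.map_map]; rfl
      refine mem_J19_iff.1 hf φ ?_ ?_ ?_
      · simp [φ, equalizeTraces_traceDiff]
      · rw [hφ, TracelessTriple.map_E, hE, map_zero]
      · rw [hφ, TracelessTriple.map_D, hD, map_zero]
    rw [← sub_add_cancel f (equalizeTraces f)]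
    exact Submodule.add_mem_sup (sub_equalizeTraces_mem f) (hθ ▸ RingHom.mem_ker.2 hθf)
  · rw [Ideal.span_singleton_le_iff_mem, mem_J19_iff]
    exact fun φ ht _ _ => ht
  · rintro _ ⟨w, rfl⟩
    exact mem_J19_iff.2 fun φ _ hE hD =>
      (generic.map_pfaff _ w).trans (TracelessTriple.pfaff_eq_zero _ hE hD _)

end VanishingIdeal

section Cone

variable {A : Type*} [CommRing A] {M N P Q : Type*} [AddCommGroup M] [Module A M]
  [AddCommGroup N] [Module A N] [AddCommGroup P] [Module A P] [AddCommGroup Q] [Module A Q]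
  {x : A} {d₁ : M →ₗ[A] N} {d₂ : N →ₗ[A] P} {d₃ : P →ₗ[A] Q}

/-- The differential `N ⊕ M → P ⊕ N` in the mapping cone of multiplication by `x` on a complex
containing `M → N → P`. -/
def cone (x : A) (d₁ : M →ₗ[A] N) (d₂ : N →ₗ[A] P) : N × M →ₗ[A] P × N :=
  (-(d₂ ∘ₗ LinearMap.fst A N M)).prod ((x • LinearMap.id).coprod d₁)

theorem cone_apply (v : N × M) : cone x d₁ d₂ v = (-d₂ v.1, x • v.1 + d₁ v.2) :=
  rfl

theorem exact_cone_cone (h₁₂ : Function.Exact d₁ d₂) (h₂₃ : Function.Exact d₂ d₃) :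
    Function.Exact (cone x d₁ d₂) (cone x d₂ d₃) := by
  rintro ⟨p, n⟩
  constructor
  · intro h
    rw [cone_apply, Prod.mk_eq_zero, neg_eq_zero] at h
    obtain ⟨n', rfl⟩ := (h₂₃ p).1 h.1
    obtain ⟨m, hm⟩ := (h₁₂ (x • n' + n)).1 (by rw [map_add, map_smul, h.2])
    exact ⟨(-n', m), by simp [cone_apply, hm]⟩
  · rintro ⟨⟨n', m⟩, hv⟩
    obtain ⟨rfl, rfl⟩ := Prod.mk.inj hv
    simp [cone_apply, h₁₂.apply_apply_eq_zero, h₂₃.apply_apply_eq_zero]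

theorem exact_cone_coprod (h₁₂ : Function.Exact d₁ d₂)
    (hx : IsSMulRegular (P ⧸ LinearMap.range d₂) x) :
    Function.Exact (cone x d₁ d₂) ((x • LinearMap.id).coprod d₂) := by
  rintro ⟨p, n⟩
  constructor
  · intro h
    have h' : x • p + d₂ n = 0 := h
    obtain ⟨n', rfl⟩ : p ∈ LinearMap.range d₂ :=
      mem_of_isSMulRegular_quotient_of_smul_mem hx
        ⟨-n, by rw [map_neg, eq_neg_of_add_eq_zero_left h']⟩
    obtain ⟨m, hm⟩ := (h₁₂ (x • n' + n)).1 (by rw [map_add, map_smul, h'])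
    exact ⟨(-n', m), by simp [cone_apply, hm]⟩
  · rintro ⟨⟨n', m⟩, hv⟩
    obtain ⟨rfl, rfl⟩ := Prod.mk.inj hv
    simp [h₁₂.apply_apply_eq_zero]

theorem exact_prod_cone (h₁ : Function.Injective d₁) (h₁₂ : Function.Exact d₁ d₂) :
    Function.Exact ((-d₁).prod (x • LinearMap.id)) (cone x d₁ d₂) := by
  rintro ⟨n, m⟩
  constructor
  · intro h
    rw [cone_apply, Prod.mk_eq_zero, neg_eq_zero] at h
    obtain ⟨m', rfl⟩ := (h₁₂ n).1 h.1
    have hm : x • m' + m = 0 := h₁ (by rw [map_add, map_smul, h.2, map_zero])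
    exact ⟨-m', by simp [eq_neg_of_add_eq_zero_right hm]⟩
  · rintro ⟨m', hv⟩
    obtain ⟨rfl, rfl⟩ := Prod.mk.inj hv
    simp [cone_apply, h₁₂.apply_apply_eq_zero]

theorem injective_prod_cone (h₁ : Function.Injective d₁) :
    Function.Injective ((-d₁).prod (x • LinearMap.id)) := fun _ _ h =>
  h₁ (neg_injective (congrArg Prod.fst h))

section Naturality

variable {B : Type*} [CommRing B] {M' N' P' : Type*} [AddCommGroup M'] [Module B M']
  [AddCommGroup N'] [Module B N'] [AddCommGroup P'] [Module B P'] {f : A →+* B}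
  {φ₁ : M →ₛₗ[f] M'} {φ₂ : N →ₛₗ[f] N'} {φ₃ : P →ₛₗ[f] P'}
  {d₁' : M' →ₗ[B] N'} {d₂' : N' →ₗ[B] P'}

theorem map_cone (h₁ : ∀ m, φ₂ (d₁ m) = d₁' (φ₁ m)) (h₂ : ∀ n, φ₃ (d₂ n) = d₂' (φ₂ n))
    (v : N × M) :
    Prod.map φ₃ φ₂ (cone x d₁ d₂ v) = cone (f x) d₁' d₂' (Prod.map φ₂ φ₁ v) := by
  simp [cone_apply, h₁, h₂]

theorem map_coprod_cone (h₁ : ∀ m, φ₂ (d₁ m) = d₁' (φ₁ m)) (v : N × M) :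
    φ₂ ((x • LinearMap.id).coprod d₁ v) =
      (f x • LinearMap.id).coprod d₁' (Prod.map φ₂ φ₁ v) := by
  simp [h₁]

theorem map_prod_cone (h₁ : ∀ m, φ₂ (d₁ m) = d₁' (φ₁ m)) (m : M) :
    Prod.map φ₂ φ₁ ((-d₁).prod (x • LinearMap.id) m) =
      (-d₁').prod (f x • LinearMap.id) (φ₁ m) := by
  simp [h₁]

end Naturality

end Cone

section Equivariance

namespace TracelessTriple

variable {A : Type*} [CommRing A] (T : TracelessTriple A) (g : Matrix.GeneralLinearGroup (Fin 2) A)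

/-- The triple obtained from a change of basis `g` of `S₂`. -/
def conj : TracelessTriple A where
  q₁ := T.q₁
  q₂ := (g⁻¹).val * T.q₂ * g.val
  a := T.a * g.val
  trace_q₁ := T.trace_q₁
  trace_q₂ := (Matrix.trace_units_conj' g T.q₂).trans T.trace_q₂

theorem conj_E : (T.conj g).E = T.E * g.val := by
  have h : g.val * (g⁻¹).val = 1 := g.mul_inv
  calc (T.conj g).E = T.q₁ * T.a * g.val - T.a * (g.val * (g⁻¹).val) * T.q₂ * g.val := by
        simp only [E, conj, mul_assoc]
    _ = T.E * g.val := by rw [h, mul_one, ← sub_mul]; rfl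

theorem conj_D : (T.conj g).D = T.D :=
  congrArg (T.q₁.det - ·) (Matrix.det_units_conj' g T.q₂)

theorem conj_pfaff (w : PfaffTerm A) : (T.conj g).pfaff w = T.pfaff (g.val * w.1, w.2) := by
  rw [pfaff_apply, pfaff_apply, conj_E, conj_D, mul_assoc]

theorem skew_conj (v : PfaffTerm A) : T.skew (g.val * v.1, g.val.det * v.2) =
    (g.val * ((T.conj g).skew v).1, ((T.conj g).skew v).2) := by
  have h : g.val * (g⁻¹).val = 1 := g.mul_inv
  refine Prod.ext ?_ ?_
  · calc T.q₂ * (g.val * v.1) + g.val * v.1 * T.q₁ + (g.val.det * v.2) • T.a.adjugate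
        = g.val * (g⁻¹).val * T.q₂ * g.val * v.1 + g.val * v.1 * T.q₁
            + v.2 • (g.val * g.val.adjugate * T.a.adjugate) := by
          rw [h, one_mul, Matrix.mul_adjugate, smul_one_mul, smul_smul, mul_comm v.2]
          simp only [mul_assoc]
      _ = g.val * ((T.conj g).skew v).1 := by
          simp only [skew_apply, conj, Matrix.adjugate_mul_distrib, mul_add, mul_assoc,
            Matrix.mul_smul]
  · simp only [skew_apply, conj, mul_assoc]

theorem socle_conj (u : A) : T.socle (g.val.det * u) =
    (g.val * ((T.conj g).socle u).1, g.val.det * ((T.conj g).socle u).2) := by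
  simp only [socle_apply, conj_E, conj_D, Matrix.adjugate_mul_distrib, Matrix.mul_smul]
  rw [← mul_assoc, Matrix.mul_adjugate, smul_one_mul, smul_smul, mul_comm u, mul_neg, mul_assoc]

end TracelessTriple

variable {A : Type*} [CommRing A]

/-- The semilinear action on the middle terms of the Pfaffian complex which combines `σ` on
coefficients with multiplication by `g` on the matrix part and by `x` on the scalar part. -/
def PfaffTerm.twist (σ : A →+* A) (g : Matrix (Fin 2) (Fin 2) A) (x : A) :
    PfaffTerm A →ₛₗ[σ] PfaffTerm A :=
  ((LinearMap.mulLeft A g).prodMap (LinearMap.mulLeft A x)).comp (PfaffTerm.map σ)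

/-- The semilinear action on a free module of rank one which combines `σ` on coefficients with
multiplication by `x`. -/
def scalarTwist (σ : A →+* A) (x : A) : A →ₛₗ[σ] A :=
  (LinearMap.mulLeft A x).comp σ.toSemilinearMap

namespace TracelessTriple

variable {T : TracelessTriple A} {g : Matrix.GeneralLinearGroup (Fin 2) A} {σ : A →+* A}
  (hσ : T.map σ = T.conj g)
include hσ

theorem pfaff_twist (w : PfaffTerm A) :
    σ.toSemilinearMap (T.pfaff w) = T.pfaff (PfaffTerm.twist σ g.val 1 w) := by
  rw [RingHom.coe_toSemilinearMap, map_pfaff, hσ, conj_pfaff]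
  simp [PfaffTerm.twist]

theorem skew_twist (v : PfaffTerm A) : PfaffTerm.twist σ g.val 1 (T.skew v) =
    T.skew (PfaffTerm.twist σ g.val g.val.det v) := by
  have h := T.skew_conj g (PfaffTerm.map σ v)
  rw [← hσ, ← map_skew] at h
  simpa [PfaffTerm.twist] using h.symm

theorem socle_twist (u : A) : PfaffTerm.twist σ g.val g.val.det (T.socle u) =
    T.socle (scalarTwist σ g.val.det u) := by
  have h := T.socle_conj g (σ u)
  rw [← hσ, ← map_socle] at h
  exact h.symm

end TracelessTriple

theorem tracelessPart_conj [Algebra ℂ A] (g : Matrix.GeneralLinearGroup (Fin 2) A)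
    (p : Matrix (Fin 2) (Fin 2) A) : tracelessPart ((g⁻¹).val * p * g.val) =
      (g⁻¹).val * tracelessPart p * g.val := by
  have htr : ((g⁻¹).val * p * g.val).trace = p.trace := Matrix.trace_units_conj' g p
  have hg : (g⁻¹).val * g.val = 1 := g.inv_mul
  rw [tracelessPart, tracelessPart, htr, mul_sub, sub_mul, Matrix.mul_smul, mul_one,
    Matrix.smul_mul, hg]

variable (g : Matrix.GeneralLinearGroup (Fin 2) ℂ)

/-- A change of basis of `S₂` with constant coefficients in the coordinate ring. -/
def constGL : Matrix.GeneralLinearGroup (Fin 2) R19 := Matrix.GeneralLinearGroup.map C g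

theorem σ19_eq_pointHom : σ19 g =
    pointHom X₁ ((constGL g)⁻¹.val * X₂ * (constGL g).val) (X₃ * (constGL g).val) := by
  have h : (constGL g)⁻¹.val = g⁻¹.val.map C := by
    rw [constGL, ← map_inv]; rfl
  refine algHom_ext_of_coords (fun i j => ?_) (fun i j => ?_) fun i j => ?_
  · rw [pointHom_X₁]
    simp [σ19, X₁]
  · rw [pointHom_X₂, h]
    simp only [X₂, Matrix.of_apply, σ19, aeval_X, Sum.elim_inl, Sum.elim_inr, constGL,
      Matrix.GeneralLinearGroup.map_apply, Matrix.map_apply, Matrix.mul_apply, Fin.sum_univ_two,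
      C_mul]
    ring
  · rw [pointHom_X₃]
    simp [σ19, X₃, constGL, Matrix.mul_apply, mul_comm]

theorem map_σ19_generic : generic.map (σ19 g : R19 →+* R19) = generic.conj (constGL g) := by
  rw [σ19_eq_pointHom, map_pointHom_generic]
  simp only [TracelessTriple.ofMatrices, tracelessPart_conj]
  rfl

theorem σ19_traceDiff : σ19 g traceDiff = traceDiff := by
  rw [σ19_eq_pointHom, pointHom_traceDiff, traceDiff]
  exact congrArg (X₁.trace - ·) (Matrix.trace_units_conj' (constGL g) X₂)

end Equivariance

section Blocks

/-- The first term `A ⊕ A⁵` of the cone: two copies of `ℂ` and the two columns of `Hom(S₁, S₂)`. -/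
def blkEquiv₁ : Blk 2 2 0 ≃ₗ[R19] R19 × PfaffTerm R19 where
  toFun v := (v.1 0, (Matrix.of v.2.1).transpose, v.1 1)
  invFun w := (![w.1, w.2.2], w.2.1.transpose, 0)
  map_add' _ _ := rfl
  map_smul' _ _ := rfl
  left_inv v := by
    refine Prod.ext (funext fun i => ?_) (Prod.ext rfl (Subsingleton.elim _ _))
    fin_cases i <;> rfl
  right_inv _ := rfl

/-- The second term `A⁵ ⊕ A⁵` of the cone; its two scalar parts carry `ℂ` and `det S₂`. -/
def blkEquiv₂ : Blk 1 4 1 ≃ₗ[R19] PfaffTerm R19 × PfaffTerm R19 where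
  toFun v := (((Matrix.of ![v.2.1 0, v.2.1 1]).transpose, v.1 0),
    ((Matrix.of ![v.2.1 2, v.2.1 3]).transpose, v.2.2 0))
  invFun w := (![w.1.2], ![w.1.1.col 0, w.1.1.col 1, w.2.1.col 0, w.2.1.col 1], ![w.2.2])
  map_add' v w := by
    refine Prod.ext (Prod.ext (Matrix.ext fun i j => ?_) rfl)
      (Prod.ext (Matrix.ext fun i j => ?_) rfl)
    all_goals fin_cases j <;> rfl
  map_smul' x v := by
    refine Prod.ext (Prod.ext (Matrix.ext fun i j => ?_) rfl)
      (Prod.ext (Matrix.ext fun i j => ?_) rfl)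
    all_goals fin_cases j <;> rfl
  left_inv v := by
    refine Prod.ext (funext fun i => ?_) (Prod.ext (funext fun i => ?_) (funext fun i => ?_))
    all_goals fin_cases i <;> rfl
  right_inv w := by
    refine Prod.ext (Prod.ext (Matrix.ext fun i j => ?_) rfl)
      (Prod.ext (Matrix.ext fun i j => ?_) rfl)
    all_goals fin_cases j <;> rfl

/-- The third term `A⁵ ⊕ A` of the cone; both scalar parts carry `det S₂`. -/
def blkEquiv₃ : Blk 0 2 2 ≃ₗ[R19] PfaffTerm R19 × R19 where
  toFun v := (((Matrix.of v.2.1).transpose, v.2.2 0), v.2.2 1)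
  invFun w := (0, w.1.1.transpose, ![w.1.2, w.2])
  map_add' _ _ := rfl
  map_smul' _ _ := rfl
  left_inv v := by
    refine Prod.ext (Subsingleton.elim _ _) (Prod.ext rfl (funext fun i => ?_))
    fin_cases i <;> rfl
  right_inv _ := rfl

/-- The last term of the cone, which is a copy of `det S₂`. -/
def blkEquiv₄ : Blk 0 0 1 ≃ₗ[R19] R19 where
  toFun v := v.2.2 0
  invFun u := (0, 0, ![u])
  map_add' _ _ := rfl
  map_smul' _ _ := rfl
  left_inv v := by
    refine Prod.ext (Subsingleton.elim _ _)
      (Prod.ext (Subsingleton.elim _ _) (funext fun i => ?_))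
    fin_cases i; rfl
  right_inv _ := rfl

section Action

variable (g : Matrix.GeneralLinearGroup (Fin 2) ℂ)

theorem twist_apply (σ : R19 →+* R19) (x : R19) (w : PfaffTerm R19) :
    PfaffTerm.twist σ (constGL g).val x w =
      (Matrix.of fun i j => ∑ k, C (g.val i k) * σ (w.1 k j), x * σ w.2) :=
  rfl

theorem det_constGL : (constGL g).val.det = C g.val.det :=
  (RingHom.map_det C g.val).symm

theorem blkEquiv₁_actBlk (v : Blk 2 2 0) : blkEquiv₁ (actBlk g v) =
    Prod.map (σ19 g : R19 →+* R19).toSemilinearMap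
      (PfaffTerm.twist (σ19 g : R19 →+* R19) (constGL g).val 1) (blkEquiv₁ v) := by
  rw [Prod.map_apply', twist_apply, one_mul]; rfl

theorem blkEquiv₂_actBlk (v : Blk 1 4 1) : blkEquiv₂ (actBlk g v) =
    Prod.map (PfaffTerm.twist (σ19 g : R19 →+* R19) (constGL g).val 1)
      (PfaffTerm.twist (σ19 g : R19 →+* R19) (constGL g).val (constGL g).val.det)
      (blkEquiv₂ v) := by
  rw [Prod.map_apply', twist_apply, twist_apply, one_mul, det_constGL]
  refine Prod.ext (Prod.ext (Matrix.ext fun i j => ?_) rfl)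
    (Prod.ext (Matrix.ext fun i j => ?_) rfl)
  all_goals fin_cases j <;> rfl

theorem blkEquiv₃_actBlk (v : Blk 0 2 2) : blkEquiv₃ (actBlk g v) =
    Prod.map (PfaffTerm.twist (σ19 g : R19 →+* R19) (constGL g).val (constGL g).val.det)
      (scalarTwist (σ19 g : R19 →+* R19) (constGL g).val.det) (blkEquiv₃ v) := by
  rw [Prod.map_apply', twist_apply, det_constGL, scalarTwist]; rfl

theorem blkEquiv₄_actBlk (v : Blk 0 0 1) : blkEquiv₄ (actBlk g v) =
    scalarTwist (σ19 g : R19 →+* R19) (constGL g).val.det (blkEquiv₄ v) := by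
  rw [det_constGL, scalarTwist]; rfl

end Action

end Blocks

section Resolution

theorem exact_generic_socle_skew : Function.Exact generic.socle generic.skew := by
  simpa only [rescaledGeneric_one_one] using exact_socle_skew_rescaledGeneric 1 1

theorem exact_generic_skew_pfaff : Function.Exact generic.skew generic.pfaff := by
  simpa only [rescaledGeneric_one_one] using exact_skew_pfaff_rescaledGeneric 1

theorem generic_socle_injective : Function.Injective generic.socle :=
  generic.socle_injective prime_generic_D.ne_zero

/-- The first differential of the resolution of `O_C`. -/
def diff₁ : Blk 2 2 0 →ₗ[R19] R19 :=
  (traceDiff • LinearMap.id).coprod generic.pfaff ∘ₗ blkEquiv₁.toLinearMap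

/-- The second differential of the resolution of `O_C`. -/
def diff₂ : Blk 1 4 1 →ₗ[R19] Blk 2 2 0 :=
  blkEquiv₁.symm.toLinearMap ∘ₗ cone traceDiff generic.skew generic.pfaff ∘ₗ
    blkEquiv₂.toLinearMap

/-- The third differential of the resolution of `O_C`. -/
def diff₃ : Blk 0 2 2 →ₗ[R19] Blk 1 4 1 :=
  blkEquiv₂.symm.toLinearMap ∘ₗ cone traceDiff generic.socle generic.skew ∘ₗ
    blkEquiv₃.toLinearMap

/-- The last differential of the resolution of `O_C`. -/
def diff₄ : Blk 0 0 1 →ₗ[R19] Blk 0 2 2 :=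
  blkEquiv₃.symm.toLinearMap ∘ₗ (-generic.socle).prod (traceDiff • LinearMap.id) ∘ₗ
    blkEquiv₄.toLinearMap

section Exactness

theorem diff₄_injective : Function.Injective diff₄ :=
  blkEquiv₃.symm.injective.comp
    ((injective_prod_cone generic_socle_injective).comp blkEquiv₄.injective)

theorem exact_diff₄_diff₃ : Function.Exact diff₄ diff₃ := by
  refine .of_ladder_linearEquiv_of_exact (e₁ := blkEquiv₄.symm) (e₂ := blkEquiv₃.symm)
    (e₃ := blkEquiv₂.symm) ?_ ?_
    (exact_prod_cone (x := traceDiff) generic_socle_injective exact_generic_socle_skew)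
  all_goals exact LinearMap.ext fun v => by simp [diff₄, diff₃]

theorem exact_diff₃_diff₂ : Function.Exact diff₃ diff₂ := by
  refine .of_ladder_linearEquiv_of_exact (e₁ := blkEquiv₃.symm) (e₂ := blkEquiv₂.symm)
    (e₃ := blkEquiv₁.symm) ?_ ?_
    (exact_cone_cone (x := traceDiff) exact_generic_socle_skew exact_generic_skew_pfaff)
  all_goals exact LinearMap.ext fun v => by simp [diff₃, diff₂]

theorem exact_diff₂_diff₁ : Function.Exact diff₂ diff₁ := by
  refine .of_ladder_linearEquiv_of_exact (e₁ := blkEquiv₂.symm) (e₂ := blkEquiv₁.symm)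
    (e₃ := LinearEquiv.refl R19 R19) ?_ ?_
    (exact_cone_coprod exact_generic_skew_pfaff isSMulRegular_traceDiff_coker_pfaff)
  all_goals exact LinearMap.ext fun v => by simp [diff₂, diff₁]

theorem range_diff₁ : LinearMap.range diff₁ = J19 := by
  rw [diff₁, LinearEquiv.range_comp, LinearMap.range_coprod, J19_eq]
  congr 1
  ext f
  simp [Ideal.mem_span_singleton', mul_comm]

end Exactness

section Equivariance

variable (g : Matrix.GeneralLinearGroup (Fin 2) ℂ)

theorem diff₁_actBlk (v : Blk 2 2 0) : diff₁ (actBlk g v) = σ19 g (diff₁ v) := by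
  have h := map_coprod_cone (x := traceDiff)
    (TracelessTriple.pfaff_twist (map_σ19_generic g)) (blkEquiv₁ v)
  rw [← blkEquiv₁_actBlk, RingHom.coe_coe, σ19_traceDiff] at h
  exact h.symm

theorem diff₂_actBlk (v : Blk 1 4 1) : diff₂ (actBlk g v) = actBlk g (diff₂ v) := by
  have h := map_cone (x := traceDiff) (TracelessTriple.skew_twist (map_σ19_generic g))
    (TracelessTriple.pfaff_twist (map_σ19_generic g)) (blkEquiv₂ v)
  rw [← blkEquiv₂_actBlk, RingHom.coe_coe, σ19_traceDiff] at h
  refine blkEquiv₁.symm_apply_eq.2 (h.symm.trans ?_)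
  rw [blkEquiv₁_actBlk]
  exact congrArg _ (blkEquiv₁.apply_symm_apply _).symm

theorem diff₃_actBlk (v : Blk 0 2 2) : diff₃ (actBlk g v) = actBlk g (diff₃ v) := by
  have h := map_cone (x := traceDiff) (TracelessTriple.socle_twist (map_σ19_generic g))
    (TracelessTriple.skew_twist (map_σ19_generic g)) (blkEquiv₃ v)
  rw [← blkEquiv₃_actBlk, RingHom.coe_coe, σ19_traceDiff] at h
  refine blkEquiv₂.symm_apply_eq.2 (h.symm.trans ?_)
  rw [blkEquiv₂_actBlk]
  exact congrArg _ (blkEquiv₂.apply_symm_apply _).symm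

theorem diff₄_actBlk (v : Blk 0 0 1) : diff₄ (actBlk g v) = actBlk g (diff₄ v) := by
  have h := map_prod_cone (x := traceDiff) (TracelessTriple.socle_twist (map_σ19_generic g))
    (blkEquiv₄ v)
  rw [← blkEquiv₄_actBlk, RingHom.coe_coe, σ19_traceDiff] at h
  refine blkEquiv₃.symm_apply_eq.2 (h.symm.trans ?_)
  rw [blkEquiv₃_actBlk]
  exact congrArg _ (blkEquiv₃.apply_symm_apply _).symm

end Equivariance

section Minimality

theorem constantCoeff_eq_pointHom :
    (constantCoeff : R19 →+* ℂ) = (pointHom 0 0 0 : R19 →ₐ[ℂ] ℂ) := by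
  refine ringHom_ext (fun z => ?_) (forall_X_of_coords
    (q := fun f => constantCoeff f = pointHom 0 0 0 f) ?_ ?_ ?_)
  · simp
  all_goals simp [X₁, X₂, X₃, pointHom]

theorem constantCoeff_traceDiff : constantCoeff traceDiff = 0 := by
  rw [constantCoeff_eq_pointHom, RingHom.coe_coe, pointHom_traceDiff, sub_self]

/-- The traceless triple of the origin. -/
def origin : TracelessTriple ℂ := .ofMatrices 0 0 0

theorem map_constantCoeff_generic : generic.map constantCoeff = origin := by
  rw [constantCoeff_eq_pointHom, map_pointHom_generic, origin]

theorem origin_E : origin.E = 0 := by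
  simp [origin, TracelessTriple.E, TracelessTriple.ofMatrices]

theorem origin_D : origin.D = 0 :=
  sub_self _

theorem constantCoeff_generic_pfaff (w : PfaffTerm R19) :
    (constantCoeff : R19 →+* ℂ).toSemilinearMap (generic.pfaff w) =
      (0 : PfaffTerm ℂ →ₗ[ℂ] ℂ) (PfaffTerm.map constantCoeff w) := by
  rw [RingHom.coe_toSemilinearMap, TracelessTriple.map_pfaff, map_constantCoeff_generic]
  simp [TracelessTriple.pfaff_apply, origin_E, origin_D]

theorem constantCoeff_generic_skew (v : PfaffTerm R19) :
    PfaffTerm.map constantCoeff (generic.skew v) =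
      (0 : PfaffTerm ℂ →ₗ[ℂ] PfaffTerm ℂ) (PfaffTerm.map constantCoeff v) := by
  rw [TracelessTriple.map_skew, map_constantCoeff_generic]
  simp [TracelessTriple.skew_apply, origin, TracelessTriple.ofMatrices, tracelessPart]

theorem constantCoeff_generic_socle (u : R19) :
    PfaffTerm.map constantCoeff (generic.socle u) =
      (0 : ℂ →ₗ[ℂ] PfaffTerm ℂ) ((constantCoeff : R19 →+* ℂ).toSemilinearMap u) := by
  rw [TracelessTriple.map_socle, map_constantCoeff_generic]
  simp [TracelessTriple.socle_apply, origin_E, origin_D]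

theorem blkAtO_of_map_blkEquiv₁ {v : Blk 2 2 0}
    (h : Prod.map (constantCoeff : R19 →+* ℂ).toSemilinearMap (PfaffTerm.map constantCoeff)
      (blkEquiv₁ v) = 0) : BlkAtO v := by
  obtain ⟨h₁, h₂⟩ := Prod.mk.inj h
  obtain ⟨h₂, h₃⟩ := Prod.mk.inj h₂
  exact ⟨Fin.forall_fin_two.2 ⟨h₁, h₃⟩, fun i j => congrFun₂ h₂ j i, fun i => i.elim0⟩

theorem blkAtO_of_map_blkEquiv₂ {v : Blk 1 4 1}
    (h : Prod.map (PfaffTerm.map constantCoeff) (PfaffTerm.map constantCoeff)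
      (blkEquiv₂ v) = 0) : BlkAtO v := by
  obtain ⟨h₁, h₂⟩ := Prod.mk.inj h
  obtain ⟨h₁, h₃⟩ := Prod.mk.inj h₁
  obtain ⟨h₂, h₄⟩ := Prod.mk.inj h₂
  refine ⟨Fin.forall_fin_one.2 h₃, fun i j => ?_, Fin.forall_fin_one.2 h₄⟩
  fin_cases i
  exacts [congrFun₂ h₁ j 0, congrFun₂ h₁ j 1, congrFun₂ h₂ j 0, congrFun₂ h₂ j 1]

theorem blkAtO_of_map_blkEquiv₃ {v : Blk 0 2 2}
    (h : Prod.map (PfaffTerm.map constantCoeff) (constantCoeff : R19 →+* ℂ).toSemilinearMap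
      (blkEquiv₃ v) = 0) : BlkAtO v := by
  obtain ⟨h₁, h₃⟩ := Prod.mk.inj h
  obtain ⟨h₁, h₂⟩ := Prod.mk.inj h₁
  exact ⟨fun i => i.elim0, fun i j => congrFun₂ h₁ j i, Fin.forall_fin_two.2 ⟨h₂, h₃⟩⟩

theorem constantCoeff_diff₁ (v : Blk 2 2 0) : constantCoeff (diff₁ v) = 0 := by
  refine (map_coprod_cone (x := traceDiff) constantCoeff_generic_pfaff (blkEquiv₁ v)).trans ?_
  simp [constantCoeff_traceDiff]

theorem blkAtO_diff₂ (v : Blk 1 4 1) : BlkAtO (diff₂ v) := by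
  apply blkAtO_of_map_blkEquiv₁
  rw [diff₂, LinearMap.comp_apply, LinearEquiv.coe_coe, LinearEquiv.apply_symm_apply]
  refine (map_cone (x := traceDiff) constantCoeff_generic_skew constantCoeff_generic_pfaff
    (blkEquiv₂ v)).trans ?_
  simp [cone_apply, constantCoeff_traceDiff]

theorem blkAtO_diff₃ (v : Blk 0 2 2) : BlkAtO (diff₃ v) := by
  apply blkAtO_of_map_blkEquiv₂
  rw [diff₃, LinearMap.comp_apply, LinearEquiv.coe_coe, LinearEquiv.apply_symm_apply]
  refine (map_cone (x := traceDiff) constantCoeff_generic_socle constantCoeff_generic_skew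
    (blkEquiv₃ v)).trans ?_
  simp [cone_apply, constantCoeff_traceDiff]

theorem blkAtO_diff₄ (v : Blk 0 0 1) : BlkAtO (diff₄ v) := by
  apply blkAtO_of_map_blkEquiv₃
  rw [diff₄, LinearMap.comp_apply, LinearEquiv.coe_coe, LinearEquiv.apply_symm_apply]
  refine (map_prod_cone (x := traceDiff) constantCoeff_generic_socle (blkEquiv₄ v)).trans ?_
  simp [constantCoeff_traceDiff]

end Minimality

end Resolution

/-- `O_C` has a finite `GL(S₂)`-equivariant minimal free resolution whose
terms are direct sums of copies of the trivial representation `ℂ`, `S₂` and `det S₂`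
only (and `S₂` and `det S₂` do occur); hence the Tor groups of `O_C` at the origin,
as `GL(S₂)`-representations, involve only the irreducibles `ℂ`, `S₂` and `det S₂`. -/
theorem stmt19 :
    ∃ (a₁ b₁ c₁ a₂ b₂ c₂ a₃ b₃ c₃ a₄ b₄ c₄ : ℕ)
      (d₁ : Blk a₁ b₁ c₁ →ₗ[R19] R19)
      (d₂ : Blk a₂ b₂ c₂ →ₗ[R19] Blk a₁ b₁ c₁)
      (d₃ : Blk a₃ b₃ c₃ →ₗ[R19] Blk a₂ b₂ c₂)
      (d₄ : Blk a₄ b₄ c₄ →ₗ[R19] Blk a₃ b₃ c₃),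
      Function.Injective d₄ ∧
      Function.Exact d₄ d₃ ∧ Function.Exact d₃ d₂ ∧ Function.Exact d₂ d₁ ∧
      LinearMap.range d₁ = J19 ∧
      -- equivariance
      (∀ g v, d₁ (actBlk g v) = σ19 g (d₁ v)) ∧
      (∀ g v, d₂ (actBlk g v) = actBlk g (d₂ v)) ∧
      (∀ g v, d₃ (actBlk g v) = actBlk g (d₃ v)) ∧
      (∀ g v, d₄ (actBlk g v) = actBlk g (d₄ v)) ∧
      -- minimality: the differentials vanish at the origin on basis vectors,
      -- so the restriction of the resolution to the origin has terms exactly the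
      -- direct sums of copies of ℂ, S₂, det S₂ recorded by (aᵢ, bᵢ, cᵢ)
      (∀ i, constantCoeff (d₁ (Pi.single i 1, 0, 0)) = 0) ∧
      (∀ i j, constantCoeff (d₁ (0, Pi.single i (Pi.single j (1 : R19)), 0)) = 0) ∧
      (∀ i, constantCoeff (d₁ (0, 0, Pi.single i 1)) = 0) ∧
      (∀ i, BlkAtO (d₂ (Pi.single i 1, 0, 0))) ∧
      (∀ i j, BlkAtO (d₂ (0, Pi.single i (Pi.single j (1 : R19)), 0))) ∧
      (∀ i, BlkAtO (d₂ (0, 0, Pi.single i 1))) ∧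
      (∀ i, BlkAtO (d₃ (Pi.single i 1, 0, 0))) ∧
      (∀ i j, BlkAtO (d₃ (0, Pi.single i (Pi.single j (1 : R19)), 0))) ∧
      (∀ i, BlkAtO (d₃ (0, 0, Pi.single i 1))) ∧
      (∀ i, BlkAtO (d₄ (Pi.single i 1, 0, 0))) ∧
      (∀ i j, BlkAtO (d₄ (0, Pi.single i (Pi.single j (1 : R19)), 0))) ∧
      (∀ i, BlkAtO (d₄ (0, 0, Pi.single i 1))) ∧
      -- the irreducibles S₂ and det S₂ really occur
      (b₁ + b₂ + b₃ + b₄ ≠ 0) ∧ (c₁ + c₂ + c₃ + c₄ ≠ 0) := by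
  exact ⟨2, 2, 0, 1, 4, 1, 0, 2, 2, 0, 0, 1, diff₁, diff₂, diff₃, diff₄,
    diff₄_injective, exact_diff₄_diff₃, exact_diff₃_diff₂, exact_diff₂_diff₁, range_diff₁,
    diff₁_actBlk, diff₂_actBlk, diff₃_actBlk, diff₄_actBlk,
    fun _ => constantCoeff_diff₁ _, fun _ _ => constantCoeff_diff₁ _,
    fun _ => constantCoeff_diff₁ _,
    fun _ => blkAtO_diff₂ _, fun _ _ => blkAtO_diff₂ _, fun _ => blkAtO_diff₂ _,
    fun _ => blkAtO_diff₃ _, fun _ _ => blkAtO_diff₃ _, fun _ => blkAtO_diff₃ _,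
    fun _ => blkAtO_diff₄ _, fun _ _ => blkAtO_diff₄ _, fun _ => blkAtO_diff₄ _,
    by decide, by decide⟩

end
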